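/- arXiv:1004.2079 — 2 statements merged into one kernel-verified Lean document; each statement's English description precedes it below -/
import Mathlib

section
/- Let G be a UD exchange network with weights w_e ∈ (0,1] for all e∈E, let (γ^0, M) be a stable trade outcome, let κ ∈ (0,1/2], and let ε > 0. Consider the Edge Rebalancing iteration γ^{t+1} := κ γ^reb(γ^t) + (1−κ) γ^t. Then there exists t ≤ ⌈1/(π κ(1−κ) ε²)⌉ such that ‖γ^reb(γ^t) − γ^t‖_∞ ≤ ε; at such t, the outcome (γ^t, M) satisfies ε-correct division, i.e., |γ^t_i − max_{k∈∂i∖j}(w_{ik}−γ^t_k)_+ − r_{ij}·Surp_{ij}(γ^t)| ≤ ε for all (i,j)∈M. -/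
namespace EN

open Finset

variable {V : Type*}

/-- The nonnegative part `(x)₊ = max (x, 0)`. -/
noncomputable def pos (x : ℝ) : ℝ := max x 0

variable [Fintype V] [DecidableEq V]

/-- The maximum of `f` over a finite set of vertices (`0` over the empty set). -/
noncomputable def fmax (s : Finset V) (f : V → ℝ) : ℝ := ⨆ k ∈ s, f k

/-- The offer from `i` to `j` given messages `α` and weights `w`:
`m_{i→j} = (w_{ij} − α_{i\j})₊ − (1/2) (w_{ij} − α_{i\j} − α_{j\i})₊`. -/
noncomputable def offer (w α : V → V → ℝ) (i j : V) : ℝ :=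
  pos (w i j - α i j) - (1 / 2) * pos (w i j - α i j - α j i)

/-- The update operator `T` of the natural dynamics:
`(Tα)_{i\j} = max_{k ∈ ∂i \ j} m_{k→i}`. -/
noncomputable def upd (G : SimpleGraph V) [DecidableRel G.Adj] (w α : V → V → ℝ)
    (i j : V) : ℝ :=
  fmax ((G.neighborFinset i).erase j) fun k => offer w α k i

/-- The earnings estimate `γ_i = max_{k ∈ ∂i} m_{k→i}`. -/
noncomputable def earn (G : SimpleGraph V) [DecidableRel G.Adj] (w α : V → V → ℝ)
    (i : V) : ℝ :=
  fmax (G.neighborFinset i) fun k => offer w α k i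

/-- Exchange network weights: symmetric and positive on every edge. -/
def GoodW (G : SimpleGraph V) (w : V → V → ℝ) : Prop :=
  (∀ i j, w i j = w j i) ∧ ∀ i j, G.Adj i j → 0 < w i j

/-- A valid message vector: nonnegative on all directed edges. -/
def ValidMsg (G : SimpleGraph V) (α : V → V → ℝ) : Prop :=
  ∀ i j, G.Adj i j → 0 ≤ α i j

/-- Fixed point of the natural-dynamics update operator. -/
def IsFixedPt (G : SimpleGraph V) [DecidableRel G.Adj] (w α : V → V → ℝ) : Prop :=
  ∀ i j, G.Adj i j → upd G w α i j = α i j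

/-- `ε`-fixed point. -/
def IsEpsFixedPt (G : SimpleGraph V) [DecidableRel G.Adj] (w α : V → V → ℝ) (ε : ℝ) : Prop :=
  ∀ i j, G.Adj i j → |α i j - upd G w α i j| ≤ ε

/-- The natural dynamics with damping factor `κ`: `α^{t+1} = (1−κ) α^t + κ T α^t`. -/
noncomputable def dyn (G : SimpleGraph V) [DecidableRel G.Adj] (w : V → V → ℝ) (κ : ℝ)
    (α0 : V → V → ℝ) : ℕ → V → V → ℝ
  | 0 => α0
  | t + 1 => fun i j =>
      (1 - κ) * dyn G w κ α0 t i j + κ * upd G w (dyn G w κ α0 t) i j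

/-- Sup norm over directed edges. -/
noncomputable def msgSup (G : SimpleGraph V) [DecidableRel G.Adj] (f : V → V → ℝ) : ℝ :=
  ⨆ p : V × V, if G.Adj p.1 p.2 then |f p.1 p.2| else 0

/-- `M` is a matching of `G`: a symmetric subrelation of adjacency pairing each node
with at most one partner. -/
structure IsMatching (G : SimpleGraph V) (M : V → V → Prop) : Prop where
  subset : ∀ i j, M i j → G.Adj i j
  symm : ∀ i j, M i j → M j i
  unique : ∀ i j k, M i j → M i k → j = k

/-- `(M, γ)` is a trade outcome. -/
def IsOutcome (G : SimpleGraph V) (w : V → V → ℝ) (M : V → V → Prop) (γ : V → ℝ) : Prop :=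
  IsMatching G M ∧ (∀ i, 0 ≤ γ i) ∧ (∀ i j, M i j → γ i + γ j = w i j) ∧
    ∀ i, (∀ j, ¬M i j) → γ i = 0

/-- Stability of an outcome. -/
def Stable (G : SimpleGraph V) (w : V → V → ℝ) (M : V → V → Prop) (γ : V → ℝ) : Prop :=
  ∀ i j, G.Adj i j → ¬M i j → w i j ≤ γ i + γ j

/-- The best alternative of `i` excluding `j`: `max_{k ∈ ∂i \ j} (w_{ik} − γ_k)₊`. -/
noncomputable def bestAlt (G : SimpleGraph V) [DecidableRel G.Adj] (w : V → V → ℝ)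
    (γ : V → ℝ) (i j : V) : ℝ :=
  fmax ((G.neighborFinset i).erase j) fun k => pos (w i k - γ k)

/-- Balance of an outcome. -/
def Balanced (G : SimpleGraph V) [DecidableRel G.Adj] (w : V → V → ℝ) (M : V → V → Prop)
    (γ : V → ℝ) : Prop :=
  ∀ i j, M i j → γ i - bestAlt G w γ i j = γ j - bestAlt G w γ j i

/-- Nash bargaining solution: a stable and balanced trade outcome. -/
def IsNBSolution (G : SimpleGraph V) [DecidableRel G.Adj] (w : V → V → ℝ)
    (M : V → V → Prop) (γ : V → ℝ) : Prop :=
  IsOutcome G w M γ ∧ Stable G w M γ ∧ Balanced G w M γ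

/-- `ε`-balance. -/
def EpsBalanced (G : SimpleGraph V) [DecidableRel G.Adj] (w : V → V → ℝ)
    (M : V → V → Prop) (γ : V → ℝ) (ε : ℝ) : Prop :=
  ∀ i j, M i j → |(γ i - bestAlt G w γ i j) - (γ j - bestAlt G w γ j i)| ≤ ε

/-- `ε`-Nash bargaining solution. -/
def IsEpsNB (G : SimpleGraph V) [DecidableRel G.Adj] (w : V → V → ℝ)
    (M : V → V → Prop) (γ : V → ℝ) (ε : ℝ) : Prop :=
  IsOutcome G w M γ ∧ Stable G w M γ ∧ EpsBalanced G w M γ ε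

/-- Feasible point of the LP relaxation of maximum weight matching. -/
def LPFeasible (G : SimpleGraph V) [DecidableRel G.Adj] (x : V → V → ℝ) : Prop :=
  (∀ i j, x i j = x j i) ∧ (∀ i j, 0 ≤ x i j) ∧ (∀ i j, ¬G.Adj i j → x i j = 0) ∧
    ∀ i, ∑ j ∈ G.neighborFinset i, x i j ≤ 1

/-- LP objective `Σ_{(i,j)∈E} w_{ij} x_{ij}` (each undirected edge counted once). -/
noncomputable def LPval (G : SimpleGraph V) [DecidableRel G.Adj] (w x : V → V → ℝ) : ℝ :=
  (1 / 2) * ∑ i, ∑ j ∈ G.neighborFinset i, w i j * x i j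

/-- Optimal point of the LP relaxation of maximum weight matching. -/
def LPOptimal (G : SimpleGraph V) [DecidableRel G.Adj] (w x : V → V → ℝ) : Prop :=
  LPFeasible G x ∧ ∀ y, LPFeasible G y → LPval G w y ≤ LPval G w x

def Integral (x : V → V → ℝ) : Prop := ∀ i j, x i j = 0 ∨ x i j = 1

def HalfIntegral (x : V → V → ℝ) : Prop := ∀ i j, x i j = 0 ∨ x i j = 1 / 2 ∨ x i j = 1

open Classical in
/-- The LP point associated to a matching. -/
noncomputable def mInd (M : V → V → Prop) (i j : V) : ℝ := if M i j then 1 else 0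

/-- The state with offers `m` induces the matching `M`: every node receiving a positive
offer is matched and receives its unique best offer from its partner, and every node
with zero earnings is unmatched. -/
def Induces (G : SimpleGraph V) [DecidableRel G.Adj] (m : V → V → ℝ)
    (M : V → V → Prop) : Prop :=
  IsMatching G M ∧
    (∀ i, (∃ k, G.Adj i k ∧ 0 < m k i) →
      ∃ j, M i j ∧ ∀ k, G.Adj i k → k ≠ j → m k i < m j i) ∧
    ∀ i, (fmax (G.neighborFinset i) fun k => m k i) = 0 → ∀ j, ¬M i j

/-- Feasibility for the dual LP. -/
def DualFeasible (G : SimpleGraph V) (w : V → V → ℝ) (y : V → ℝ) : Prop :=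
  (∀ i, 0 ≤ y i) ∧ ∀ i j, G.Adj i j → w i j ≤ y i + y j

/-- Optimality for the dual LP. -/
def DualOptimal (G : SimpleGraph V) (w : V → V → ℝ) (y : V → ℝ) : Prop :=
  DualFeasible G w y ∧ ∀ z, DualFeasible G w z → ∑ i, y i ≤ ∑ i, z i

/-- The unmatched balance property at every edge. -/
def UnmatchedBalance (G : SimpleGraph V) [DecidableRel G.Adj] (w : V → V → ℝ)
    (y : V → ℝ) : Prop :=
  ∀ i j, G.Adj i j → y i - bestAlt G w y i j = y j - bestAlt G w y j i

/-! ### Unequal division -/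

/-- Valid split fractions: `r_{ij} ∈ (0,1)` with `r_{ij} + r_{ji} = 1` on every edge. -/
def GoodR (G : SimpleGraph V) (r : V → V → ℝ) : Prop :=
  ∀ i j, G.Adj i j → 0 < r i j ∧ r i j < 1 ∧ r i j + r j i = 1

/-- The UD offer from `i` to `j`. -/
noncomputable def offerUD (w r α : V → V → ℝ) (i j : V) : ℝ :=
  pos (w i j - α i j) - r i j * pos (w i j - α i j - α j i)

/-- The UD update operator. -/
noncomputable def updUD (G : SimpleGraph V) [DecidableRel G.Adj] (w r α : V → V → ℝ)
    (i j : V) : ℝ :=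
  fmax ((G.neighborFinset i).erase j) fun k => offerUD w r α k i

/-- The UD earnings estimate. -/
noncomputable def earnUD (G : SimpleGraph V) [DecidableRel G.Adj] (w r α : V → V → ℝ)
    (i : V) : ℝ :=
  fmax (G.neighborFinset i) fun k => offerUD w r α k i

/-- Fixed point of the UD update operator. -/
def IsFixedPtUD (G : SimpleGraph V) [DecidableRel G.Adj] (w r α : V → V → ℝ) : Prop :=
  ∀ i j, G.Adj i j → updUD G w r α i j = α i j

/-- Correct division. -/
def CorrectDiv (G : SimpleGraph V) [DecidableRel G.Adj] (w r : V → V → ℝ)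
    (M : V → V → Prop) (γ : V → ℝ) : Prop :=
  ∀ i j, M i j →
    (1 / r i j) * (γ i - bestAlt G w γ i j) = (1 / r j i) * (γ j - bestAlt G w γ j i)

/-- UD solution: a stable trade outcome satisfying correct division. -/
def IsUDSolution (G : SimpleGraph V) [DecidableRel G.Adj] (w r : V → V → ℝ)
    (M : V → V → Prop) (γ : V → ℝ) : Prop :=
  IsOutcome G w M γ ∧ Stable G w M γ ∧ CorrectDiv G w r M γ

/-- Edge surplus. -/
noncomputable def surp (G : SimpleGraph V) [DecidableRel G.Adj] (w : V → V → ℝ)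
    (γ : V → ℝ) (i j : V) : ℝ :=
  w i j - bestAlt G w γ i j - bestAlt G w γ j i

open Classical in
/-- The rebalanced allocation `γ^reb`. -/
noncomputable def reb (G : SimpleGraph V) [DecidableRel G.Adj] (w r : V → V → ℝ)
    (M : V → V → Prop) (γ : V → ℝ) (i : V) : ℝ :=
  if h : ∃ j, M i j then
    bestAlt G w γ i h.choose + r i h.choose * surp G w γ i h.choose
  else 0

/-- The Edge Rebalancing iteration `γ^{t+1} = κ γ^reb(γ^t) + (1−κ) γ^t`. -/
noncomputable def rebIter (G : SimpleGraph V) [DecidableRel G.Adj] (w r : V → V → ℝ)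
    (M : V → V → Prop) (κ : ℝ) (γ0 : V → ℝ) : ℕ → V → ℝ
  | 0 => γ0
  | t + 1 => fun i =>
      κ * reb G w r M (rebIter G w r M κ γ0 t) i + (1 - κ) * rebIter G w r M κ γ0 t i

/-!
Rebalancing is nonexpansive for the sup norm, and for `κ ≤ 1/2` the damped step preserves stable
outcomes, so the iteration is a Krasnoselskii–Mann iteration with bounded orbit. Its residual obeys
the sharp Baillon–Bruck rate: by induction, `‖T x_m - x_n‖ ≤ 𝔼 sign (1 + S - S')` and
`‖x_m - x_n‖ ≤ 𝔼 sign (S - S')` for `n ≤ m`, with `S ∼ Bin(m, κ)` and `S' ∼ Bin(n, κ)` independent.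
For `m = n` Fourier inversion turns the first expectation into
`π⁻¹ ∫₀^π (1 + cos θ) (1 - 2q + 2q cos θ)ⁿ dθ` with `q = κ (1 - κ)`, and the substitution
`t = sin (θ / 2)` bounds it by a Gaussian integral.
-/

section SignMean

/-- The expectation operator `f ↦ (k ↦ 𝔼 f (k + s X))` with `X` a Bernoulli variable of
parameter `p`, acting on real functions on `ℤ`. -/
noncomputable def bernoulliMean (p : ℝ) (s : ℤ) : Module.End ℝ (ℤ → ℝ) where
  toFun f k := (1 - p) * f k + p * f (k + s)
  map_add' f g := by ext k; simp only [Pi.add_apply]; ring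
  map_smul' c f := by ext k; simp only [Pi.smul_apply, smul_eq_mul, RingHom.id_apply]; ring

theorem bernoulliMean_apply (p : ℝ) (s : ℤ) (f : ℤ → ℝ) (k : ℤ) :
    bernoulliMean p s f k = (1 - p) * f k + p * f (k + s) := rfl

theorem commute_bernoulliMean (p : ℝ) (s t : ℤ) :
    Commute (bernoulliMean p s) (bernoulliMean p t) := by
  ext f k
  simp only [Module.End.mul_apply, bernoulliMean_apply, add_right_comm k t s]
  ring

/-- The expectation `𝔼 sign (k + S - S')` for independent binomial variables `S ∼ Bin(m, p)` and
`S' ∼ Bin(n, p)`. It solves the recursion that controls the distance between the `m`-th and the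
`n`-th term of a Krasnoselskii–Mann iteration. -/
noncomputable def signMean (p : ℝ) (m n : ℕ) : ℤ → ℝ :=
  (bernoulliMean p 1 ^ m * bernoulliMean p (-1) ^ n) fun k => (k.sign : ℝ)

variable (p : ℝ)

theorem signMean_zero_zero (k : ℤ) : signMean p 0 0 k = k.sign := by
  simp [signMean]

theorem signMean_succ_left (m n : ℕ) (k : ℤ) :
    signMean p (m + 1) n k = (1 - p) * signMean p m n k + p * signMean p m n (k + 1) := by
  rw [signMean, pow_succ', mul_assoc]
  rfl

theorem signMean_succ_right (m n : ℕ) (k : ℤ) :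
    signMean p m (n + 1) k = (1 - p) * signMean p m n k + p * signMean p m n (k - 1) := by
  rw [signMean, pow_succ', ← mul_assoc, ((commute_bernoulliMean p 1 (-1)).pow_left m).eq,
    mul_assoc]
  rfl

theorem signMean_zero_right_of_pos (m : ℕ) {k : ℤ} (hk : 0 < k) : signMean p m 0 k = 1 := by
  induction m generalizing k with
  | zero => simp [signMean_zero_zero, Int.sign_eq_one_of_pos hk]
  | succ m ih =>
    rw [signMean_succ_left, ih hk, ih (by lia)]
    ring

theorem signMean_succ_succ (n : ℕ) (k : ℤ) :
    signMean p (n + 1) (n + 1) k = p * (1 - p) * signMean p n n (k + 1) +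
      (1 - 2 * (p * (1 - p))) * signMean p n n k + p * (1 - p) * signMean p n n (k - 1) := by
  simp only [signMean_succ_left, signMean_succ_right, add_sub_cancel_right]
  ring

theorem signMean_self_neg (n : ℕ) (k : ℤ) : signMean p n n (-k) = -signMean p n n k := by
  induction n generalizing k with
  | zero => simp [signMean_zero_zero, Int.sign_neg]
  | succ n ih =>
    rw [signMean_succ_succ, signMean_succ_succ, show -k + 1 = -(k - 1) by ring,
      show -k - 1 = -(k + 1) by ring, ih, ih, ih]
    ring

theorem signMean_self_zero (n : ℕ) : signMean p n n 0 = 0 :=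
  self_eq_neg.1 (by simpa using signMean_self_neg p n 0)

theorem integral_cos_int_mul (k : ℤ) :
    ∫ θ in (0 : ℝ)..Real.pi, Real.cos (k * θ) = if k = 0 then Real.pi else 0 := by
  split_ifs with hk
  · simp [hk]
  · rw [intervalIntegral.integral_comp_mul_left Real.cos (Int.cast_ne_zero.2 hk)]
    simp [Real.sin_int_mul_pi]

theorem cos_add_mul_add_cos_sub_mul (x θ : ℝ) :
    Real.cos ((x + 1) * θ) + Real.cos ((x - 1) * θ) = 2 * Real.cos θ * Real.cos (x * θ) := by
  rw [add_one_mul, sub_one_mul, Real.cos_add, Real.cos_sub]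
  ring

theorem sign_add_one_sub_sign (k : ℤ) :
    ((k + 1).sign : ℝ) - k.sign = (if k = 0 then 1 else 0) + if k + 1 = 0 then 1 else 0 := by
  obtain hk | rfl | rfl | hk : k < -1 ∨ k = -1 ∨ k = 0 ∨ 0 < k := by lia
  · rw [Int.sign_eq_neg_one_of_neg (by lia), Int.sign_eq_neg_one_of_neg (by lia),
      if_neg (by lia), if_neg (by lia)]
    simp
  · simp
  · simp
  · rw [Int.sign_eq_one_of_pos (by lia), Int.sign_eq_one_of_pos hk, if_neg (by lia),
      if_neg (by lia)]
    simp

/-- The increment of `𝔼 sign (· + Y)` between `k` and `k + 1`, in Fourier form, where `Y` is the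
position after `n` steps of the walk on `ℤ` that moves by `±1` with probability `q` each and is
otherwise lazy. The factor `1 - 2q + 2q cos θ` is the characteristic function of one step. -/
noncomputable def fourierIncrement (q : ℝ) (n : ℕ) (k : ℤ) : ℝ :=
  (∫ θ in (0 : ℝ)..Real.pi, (Real.cos (k * θ) + Real.cos ((k + 1) * θ)) *
    (1 - 2 * q + 2 * q * Real.cos θ) ^ n) / Real.pi

theorem fourierIncrement_zero (q : ℝ) (k : ℤ) :
    fourierIncrement q 0 k = (k + 1).sign - k.sign := by
  have hcos (j : ℤ) :
      IntervalIntegrable (fun θ => Real.cos (j * θ)) MeasureTheory.volume 0 Real.pi :=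
    (by fun_prop : Continuous _).intervalIntegrable _ _
  have hint := intervalIntegral.integral_add (hcos k) (hcos (k + 1))
  rw [integral_cos_int_mul, integral_cos_int_mul] at hint
  push_cast at hint
  simp only [fourierIncrement, pow_zero, mul_one, hint, sign_add_one_sub_sign, add_div, ite_div,
    zero_div, div_self Real.pi_ne_zero]

theorem fourierIncrement_succ (q : ℝ) (n : ℕ) (k : ℤ) :
    fourierIncrement q (n + 1) k = q * fourierIncrement q n (k + 1) +
      (1 - 2 * q) * fourierIncrement q n k + q * fourierIncrement q n (k - 1) := by
  have hint (c : ℝ) (j : ℤ) : IntervalIntegrable (fun θ => c *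
      ((Real.cos (j * θ) + Real.cos ((j + 1) * θ)) * (1 - 2 * q + 2 * q * Real.cos θ) ^ n))
      MeasureTheory.volume 0 Real.pi :=
    (by fun_prop : Continuous _).intervalIntegrable _ _
  simp only [fourierIncrement, ← mul_div_assoc, ← add_div, ← intervalIntegral.integral_const_mul]
  rw [← intervalIntegral.integral_add (hint _ _) (hint _ _),
    ← intervalIntegral.integral_add ((hint _ _).add (hint _ _)) (hint _ _)]
  congr 2 with θ
  have hk := cos_add_mul_add_cos_sub_mul k θ
  have hk' := cos_add_mul_add_cos_sub_mul (k + 1) θ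
  rw [add_sub_cancel_right] at hk'
  push_cast
  rw [sub_add_cancel, pow_succ]
  linear_combination -q * (1 - 2 * q + 2 * q * Real.cos θ) ^ n * (hk + hk')

theorem signMean_add_one_sub (n : ℕ) (k : ℤ) :
    signMean p n n (k + 1) - signMean p n n k = fourierIncrement (p * (1 - p)) n k := by
  induction n generalizing k with
  | zero => rw [signMean_zero_zero, signMean_zero_zero, fourierIncrement_zero]
  | succ n ih =>
    rw [fourierIncrement_succ, ← ih, ← ih, ← ih, signMean_succ_succ, signMean_succ_succ,
      add_sub_cancel_right, sub_add_cancel]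
    ring

theorem signMean_self_one (n : ℕ) :
    signMean p n n 1 = (∫ θ in (0 : ℝ)..Real.pi, (1 + Real.cos θ) *
      (1 - 2 * (p * (1 - p)) + 2 * (p * (1 - p)) * Real.cos θ) ^ n) / Real.pi := by
  simpa [signMean_self_zero, fourierIncrement] using signMean_add_one_sub p n 0

end SignMean

section GaussianBound

theorem integral_exp_neg_mul_sq_le {b : ℝ} (hb : 0 < b) :
    ∫ t in (0 : ℝ)..1, Real.exp (-b * t ^ 2) ≤ √(Real.pi / b) / 2 := by
  rw [← integral_gaussian_Ioi, intervalIntegral.integral_of_le zero_le_one]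
  exact MeasureTheory.setIntegral_mono_set (integrable_exp_neg_mul_sq hb).integrableOn
    (.of_forall fun _ => (Real.exp_pos _).le) Set.Ioc_subset_Ioi_self.eventuallyLE

theorem integral_exp_neg_mul_sin_half_sq_mul_cos_half (b : ℝ) :
    ∫ θ in (0 : ℝ)..Real.pi, Real.exp (-b * Real.sin (θ / 2) ^ 2) * (Real.cos (θ / 2) * (1 / 2)) =
      ∫ t in (0 : ℝ)..1, Real.exp (-b * t ^ 2) := by
  simpa [-neg_mul] using intervalIntegral.integral_comp_mul_deriv (a := 0) (b := Real.pi)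
    (f := fun θ => Real.sin (θ / 2)) (g := fun t => Real.exp (-b * t ^ 2))
    (fun θ _ => ((hasDerivAt_id θ).div_const 2).sin) (by fun_prop) (by fun_prop)

variable {q : ℝ}

theorem one_add_cos_mul_pow_le (hq : q ∈ Set.Icc (0 : ℝ) (1 / 4)) (n : ℕ) {θ : ℝ}
    (hθ : θ ∈ Set.Icc 0 Real.pi) :
    (1 + Real.cos θ) * (1 - 2 * q + 2 * q * Real.cos θ) ^ n ≤
      4 * (Real.exp (-(4 * q * n) * Real.sin (θ / 2) ^ 2) * (Real.cos (θ / 2) * (1 / 2))) := by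
  have hcos : Real.cos θ = 2 * Real.cos (θ / 2) ^ 2 - 1 := by
    rw [← Real.cos_two_mul, mul_div_cancel₀ θ two_ne_zero]
  have hsin : Real.sin (θ / 2) ^ 2 = 1 - Real.cos (θ / 2) ^ 2 := Real.sin_sq _
  have hcos_nonneg : 0 ≤ Real.cos (θ / 2) :=
    Real.cos_nonneg_of_mem_Icc ⟨by linarith [hθ.1, Real.pi_pos], by linarith [hθ.2]⟩
  have hbase : 1 - 2 * q + 2 * q * Real.cos θ = 1 - 4 * q * Real.sin (θ / 2) ^ 2 := by
    rw [hcos, hsin]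
    ring
  have hbase_nonneg : 0 ≤ 1 - 4 * q * Real.sin (θ / 2) ^ 2 := by
    have := mul_le_mul (by linarith [hq.2] : 4 * q ≤ 1) (Real.sin_sq_le_one (θ / 2))
      (sq_nonneg _) zero_le_one
    linarith
  have hpow : (1 - 4 * q * Real.sin (θ / 2) ^ 2) ^ n ≤
      Real.exp (-(4 * q * n) * Real.sin (θ / 2) ^ 2) :=
    calc _ ≤ Real.exp (-(4 * q * Real.sin (θ / 2) ^ 2)) ^ n :=
          pow_le_pow_left₀ hbase_nonneg (Real.one_sub_le_exp_neg _) n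
      _ = _ := by rw [← Real.exp_nat_mul]; ring_nf
  have hweight : 1 + Real.cos θ ≤ 2 * Real.cos (θ / 2) := by
    have := mul_le_of_le_one_left hcos_nonneg (Real.cos_le_one (θ / 2))
    linarith
  calc (1 + Real.cos θ) * (1 - 2 * q + 2 * q * Real.cos θ) ^ n
      ≤ 2 * Real.cos (θ / 2) * Real.exp (-(4 * q * n) * Real.sin (θ / 2) ^ 2) := by
        rw [hbase]
        gcongr
    _ = _ := by ring

theorem integral_one_add_cos_mul_pow_le (hq0 : 0 < q) (hq : q ≤ 1 / 4) {n : ℕ} (hn : 0 < n) :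
    ∫ θ in (0 : ℝ)..Real.pi, (1 + Real.cos θ) * (1 - 2 * q + 2 * q * Real.cos θ) ^ n ≤
      Real.pi / √(Real.pi * q * n) := by
  have hb : 0 < 4 * q * n := by positivity
  calc _ ≤ ∫ θ in (0 : ℝ)..Real.pi,
          4 * (Real.exp (-(4 * q * n) * Real.sin (θ / 2) ^ 2) * (Real.cos (θ / 2) * (1 / 2))) :=
        intervalIntegral.integral_mono_on Real.pi_pos.le
          ((by fun_prop : Continuous _).intervalIntegrable _ _)
          ((by fun_prop : Continuous _).intervalIntegrable _ _)
          fun _ => one_add_cos_mul_pow_le ⟨hq0.le, hq⟩ n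
    _ = 4 * ∫ t in (0 : ℝ)..1, Real.exp (-(4 * q * n) * t ^ 2) := by
        rw [intervalIntegral.integral_const_mul, integral_exp_neg_mul_sin_half_sq_mul_cos_half]
    _ ≤ 4 * (√(Real.pi / (4 * q * n)) / 2) := by
        gcongr
        exact integral_exp_neg_mul_sq_le hb
    _ = Real.pi / √(Real.pi * q * n) := by
        have hsq : Real.pi / (4 * q * n) = (Real.pi / 2) ^ 2 / (Real.pi * q * n) := by
          field_simp
          norm_num
        rw [hsq, Real.sqrt_div (by positivity), Real.sqrt_sq (by positivity)]
        ring

theorem signMean_self_one_le {p : ℝ} (hp : p ∈ Set.Ioo (0 : ℝ) 1) {n : ℕ} (hn : 0 < n) :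
    signMean p n n 1 ≤ 1 / √(Real.pi * (p * (1 - p)) * n) := by
  rw [signMean_self_one, div_le_iff₀ Real.pi_pos, one_div_mul_eq_div]
  exact integral_one_add_cos_mul_pow_le (mul_pos hp.1 (sub_pos.2 hp.2))
    (by linarith [sq_nonneg (p - 1 / 2)]) hn

end GaussianBound

section KrasnoselskiiMann

variable {E : Type*} [SeminormedAddCommGroup E] [NormedSpace ℝ E] {T : E → E} {x : ℕ → E}
  {p C : ℝ}

theorem norm_convexCombo_le {a b : E} {A B : ℝ} (hp : p ∈ Set.Icc (0 : ℝ) 1) (ha : ‖a‖ ≤ A)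
    (hb : ‖b‖ ≤ B) : ‖(1 - p) • a + p • b‖ ≤ (1 - p) * A + p * B := by
  have hp' : 0 ≤ 1 - p := sub_nonneg.2 hp.2
  calc ‖(1 - p) • a + p • b‖ ≤ (1 - p) * ‖a‖ + p * ‖b‖ :=
        convexOn_univ_norm.2 trivial trivial hp' hp.1 (by ring)
    _ ≤ (1 - p) * A + p * B := add_le_add (mul_le_mul_of_nonneg_left ha hp')
        (mul_le_mul_of_nonneg_left hb hp.1)

theorem norm_sub_le_mul_signMean_zero (hp : p ∈ Set.Icc (0 : ℝ) 1)
    (hx : ∀ n, x (n + 1) = p • T (x n) + (1 - p) • x n) {n : ℕ}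
    (hTx : ∀ m, n ≤ m → ‖T (x m) - x n‖ ≤ C * signMean p m n 1) {m : ℕ} (hnm : n ≤ m) :
    ‖x m - x n‖ ≤ C * signMean p m n 0 := by
  induction m, hnm using Nat.le_induction with
  | base => simp [signMean_self_zero]
  | succ m hnm ih =>
    calc ‖x (m + 1) - x n‖ = ‖(1 - p) • (x m - x n) + p • (T (x m) - x n)‖ := by
          rw [hx]
          congr 1
          module
      _ ≤ (1 - p) * (C * signMean p m n 0) + p * (C * signMean p m n 1) :=
          norm_convexCombo_le hp ih (hTx m hnm)
      _ = C * signMean p (m + 1) n 0 := by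
          rw [signMean_succ_left, zero_add]
          ring

theorem norm_map_sub_le_mul_signMean_one (hT : LipschitzWith 1 T) (hp : p ∈ Set.Icc (0 : ℝ) 1)
    (hx : ∀ n, x (n + 1) = p • T (x n) + (1 - p) • x n) (hC : ∀ n, ‖T (x n) - x 0‖ ≤ C)
    {m n : ℕ} (hnm : n ≤ m) : ‖T (x m) - x n‖ ≤ C * signMean p m n 1 := by
  induction n generalizing m with
  | zero => simpa [signMean_zero_right_of_pos] using hC m
  | succ n ih =>
    have hTT : ‖T (x m) - T (x n)‖ ≤ C * signMean p m n 0 :=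
      (hT.norm_sub_le (x m) (x n)).trans <| by
        simpa using norm_sub_le_mul_signMean_zero hp hx (fun _ => ih) (n.le_succ.trans hnm)
    calc ‖T (x m) - x (n + 1)‖ = ‖(1 - p) • (T (x m) - x n) + p • (T (x m) - T (x n))‖ := by
          rw [hx]
          congr 1
          module
      _ ≤ (1 - p) * (C * signMean p m n 1) + p * (C * signMean p m n 0) :=
          norm_convexCombo_le hp (ih (n.le_succ.trans hnm)) hTT
      _ = C * signMean p m (n + 1) 1 := by
          rw [signMean_succ_right, sub_self]
          ring

theorem norm_map_sub_self_le_div_sqrt (hT : LipschitzWith 1 T) (hp : p ∈ Set.Ioo (0 : ℝ) 1)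
    (hx : ∀ n, x (n + 1) = p • T (x n) + (1 - p) • x n) (hC : ∀ n, ‖T (x n) - x 0‖ ≤ C)
    {n : ℕ} (hn : 0 < n) : ‖T (x n) - x n‖ ≤ C / √(Real.pi * (p * (1 - p)) * n) := by
  have hC0 : 0 ≤ C := (norm_nonneg _).trans (hC 0)
  calc ‖T (x n) - x n‖ ≤ C * signMean p n n 1 :=
        norm_map_sub_le_mul_signMean_one hT (Set.Ioo_subset_Icc_self hp) hx hC le_rfl
    _ ≤ C * (1 / √(Real.pi * (p * (1 - p)) * n)) :=
        mul_le_mul_of_nonneg_left (signMean_self_one_le hp hn) hC0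
    _ = C / √(Real.pi * (p * (1 - p)) * n) := mul_one_div _ _

theorem div_sqrt_le_of_sq_div_le {a ε t : ℝ} (ha : 0 < a) (hε : 0 < ε)
    (ht : C ^ 2 / (a * ε ^ 2) ≤ t) : C / √(a * t) ≤ ε := by
  refine div_le_of_le_mul₀ (Real.sqrt_nonneg _) hε.le ?_
  rw [div_le_iff₀ (by positivity)] at ht
  calc C ≤ √(ε ^ 2 * (a * t)) := Real.le_sqrt_of_sq_le (by linarith)
    _ = ε * √(a * t) := by rw [Real.sqrt_mul (sq_nonneg ε), Real.sqrt_sq hε.le]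

end KrasnoselskiiMann

section Fmax

variable {U : Type*} {s : Finset U} {f : U → ℝ}

theorem fmax_eq_iSup_ite [DecidableEq U] (s : Finset U) (f : U → ℝ) :
    fmax s f = ⨆ k, if k ∈ s then f k else 0 := by
  refine iSup_congr fun k => ?_
  by_cases hk : k ∈ s <;> simp [hk]

theorem le_fmax [Finite U] {k : U} (hk : k ∈ s) : f k ≤ fmax s f := by
  classical
  rw [fmax_eq_iSup_ite]
  simpa [hk] using le_ciSup (f := fun k => if k ∈ s then f k else 0)
    (Set.finite_range _).bddAbove k

theorem fmax_le {c : ℝ} (hc : 0 ≤ c) (h : ∀ k ∈ s, f k ≤ c) : fmax s f ≤ c :=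
  Real.iSup_le (fun k => Real.iSup_le (h k) hc) hc

theorem fmax_nonneg (h : ∀ k ∈ s, 0 ≤ f k) : 0 ≤ fmax s f :=
  Real.iSup_nonneg fun k => Real.iSup_nonneg (h k)

end Fmax

section Outcome

variable {U : Type*} {G : SimpleGraph U} {w : U → U → ℝ} {M : U → U → Prop} {γ γ' : U → ℝ}

namespace IsOutcome

theorem isMatching (h : IsOutcome G w M γ) : IsMatching G M := h.1

theorem nonneg (h : IsOutcome G w M γ) (i : U) : 0 ≤ γ i := h.2.1 i

theorem add_eq (h : IsOutcome G w M γ) {i j : U} (hij : M i j) : γ i + γ j = w i j :=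
  h.2.2.1 i j hij

theorem eq_zero (h : IsOutcome G w M γ) {i : U} (hi : ∀ j, ¬M i j) : γ i = 0 := h.2.2.2 i hi

theorem le_of_weight_le (h : IsOutcome G w M γ) {W : ℝ} (hW0 : 0 ≤ W)
    (hW : ∀ i j, M i j → w i j ≤ W) (i : U) : γ i ≤ W := by
  by_cases! hi : ∃ j, M i j
  · obtain ⟨j, hij⟩ := hi
    linarith [h.add_eq hij, h.nonneg j, hW i j hij]
  · exact (h.eq_zero hi).trans_le hW0

theorem norm_sub_le [Fintype U] (h : IsOutcome G w M γ) (h' : IsOutcome G w M γ') {W : ℝ}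
    (hW0 : 0 ≤ W) (hW : ∀ i j, M i j → w i j ≤ W) : ‖γ - γ'‖ ≤ W :=
  (pi_norm_le_iff_of_nonneg hW0).2 fun i => abs_sub_le_of_nonneg_of_le (h.nonneg i)
    (h.le_of_weight_le hW0 hW i) (h'.nonneg i) (h'.le_of_weight_le hW0 hW i)

theorem convexCombo (h : IsOutcome G w M γ) (h' : IsOutcome G w M γ') {a b : ℝ} (ha : 0 ≤ a)
    (hb : 0 ≤ b) (hab : a + b = 1) : IsOutcome G w M (a • γ + b • γ') := by
  refine ⟨h.isMatching, fun i => ?_, fun i j hij => ?_, fun i hi => ?_⟩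
  · exact add_nonneg (mul_nonneg ha (h.nonneg i)) (mul_nonneg hb (h'.nonneg i))
  · simp only [Pi.add_apply, Pi.smul_apply, smul_eq_mul]
    linear_combination a * h.add_eq hij + b * h'.add_eq hij + w i j * hab
  · simp [h.eq_zero hi, h'.eq_zero hi]

end IsOutcome

end Outcome

section Rebalancing

variable {G : SimpleGraph V} [DecidableRel G.Adj] {w r : V → V → ℝ} {M : V → V → Prop}
  {γ : V → ℝ} {i j k : V} {κ W : ℝ}

theorem bestAlt_nonneg : 0 ≤ bestAlt G w γ i j :=
  fmax_nonneg fun _ _ => le_max_right _ _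

theorem sub_le_bestAlt (hik : G.Adj i k) (hkj : k ≠ j) : w i k - γ k ≤ bestAlt G w γ i j :=
  (le_max_left _ _).trans
    (le_fmax (f := fun k => pos (w i k - γ k))
      (Finset.mem_erase.2 ⟨hkj, (G.mem_neighborFinset i k).2 hik⟩))

theorem bestAlt_le {c : ℝ} (hc : 0 ≤ c) (h : ∀ k, G.Adj i k → k ≠ j → w i k - γ k ≤ c) :
    bestAlt G w γ i j ≤ c := by
  refine fmax_le hc fun k hk => max_le ?_ hc
  rw [Finset.mem_erase, SimpleGraph.mem_neighborFinset] at hk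
  exact h k hk.2 hk.1

variable (G w i j) in
theorem lipschitzWith_bestAlt : LipschitzWith 1 fun γ => bestAlt G w γ i j := by
  refine .of_le_add fun γ γ' =>
    bestAlt_le (add_nonneg bestAlt_nonneg dist_nonneg) fun k hik hkj => ?_
  have hdist : |γ k - γ' k| ≤ dist γ γ' := dist_le_pi_dist γ γ' k
  linarith [(abs_le.1 hdist).1, sub_le_bestAlt (w := w) (γ := γ') hik hkj]

theorem reb_of_matched (hM : IsMatching G M) (hij : M i j) :
    reb G w r M γ i = bestAlt G w γ i j + r i j * surp G w γ i j := by
  have hex : ∃ j, M i j := ⟨j, hij⟩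
  rw [reb, dif_pos hex, hM.unique _ _ _ hex.choose_spec hij]

theorem reb_of_unmatched (hi : ∀ j, ¬M i j) : reb G w r M γ i = 0 :=
  dif_neg (not_exists.2 hi)

theorem lipschitzWith_reb (hM : IsMatching G M) (hr0 : ∀ i j, M i j → 0 ≤ r i j)
    (hr1 : ∀ i j, M i j → r i j + r j i = 1) : LipschitzWith 1 (reb G w r M) := by
  refine .mk_one fun γ γ' => (dist_pi_le_iff dist_nonneg).2 fun i => ?_
  by_cases! hi : ∃ j, M i j
  · obtain ⟨j, hij⟩ := hi
    have hlip (i j : V) : |bestAlt G w γ i j - bestAlt G w γ' i j| ≤ dist γ γ' := by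
      simpa [Real.dist_eq] using (lipschitzWith_bestAlt G w i j).dist_le_mul γ γ'
    have hrij := hr0 i j hij
    have hrji : 1 - r i j = r j i := by linarith [hr1 i j hij]
    calc dist (reb G w r M γ i) (reb G w r M γ' i)
        = |r j i * (bestAlt G w γ i j - bestAlt G w γ' i j) +
            r i j * (bestAlt G w γ' j i - bestAlt G w γ j i)| := by
          rw [Real.dist_eq, reb_of_matched hM hij, reb_of_matched hM hij, ← hrji, surp, surp]
          ring_nf
      _ ≤ r j i * dist γ γ' + r i j * dist γ γ' := by
          refine (abs_add_le _ _).trans ?_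
          rw [abs_mul, abs_mul, abs_of_nonneg hrij, abs_of_nonneg (hr0 j i (hM.symm i j hij)),
            abs_sub_comm (bestAlt G w γ' j i)]
          gcongr
          exacts [hr0 j i (hM.symm i j hij), hlip i j, hlip j i]
      _ = dist γ γ' := by rw [← hrji]; ring
  · simp [reb_of_unmatched hi]

theorem reb_add_reb (hw : ∀ i j, w i j = w j i) (hr1 : ∀ i j, M i j → r i j + r j i = 1)
    (hM : IsMatching G M) (hij : M i j) : reb G w r M γ i + reb G w r M γ j = w i j := by
  rw [reb_of_matched hM hij, reb_of_matched hM (hM.symm i j hij), surp, surp, hw j i]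
  linear_combination (w i j - bestAlt G w γ i j - bestAlt G w γ j i) * hr1 i j hij

namespace IsOutcome

theorem bestAlt_le_of_stable (h : IsOutcome G w M γ) (hs : Stable G w M γ) (hij : M i j) :
    bestAlt G w γ i j ≤ γ i :=
  bestAlt_le (h.nonneg i) fun k hik hkj =>
    sub_le_iff_le_add.2 (hs i k hik fun hM => hkj (h.isMatching.unique _ _ _ hM hij))

theorem surp_nonneg (h : IsOutcome G w M γ) (hs : Stable G w M γ) (hij : M i j) :
    0 ≤ surp G w γ i j := by
  rw [surp]
  linarith [h.add_eq hij, h.bestAlt_le_of_stable hs hij,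
    h.bestAlt_le_of_stable hs (h.isMatching.symm i j hij)]

theorem bestAlt_le_reb (h : IsOutcome G w M γ) (hs : Stable G w M γ) (hij : M i j)
    (hr : 0 ≤ r i j) : bestAlt G w γ i j ≤ reb G w r M γ i := by
  rw [reb_of_matched h.isMatching hij]
  exact le_add_of_nonneg_right (mul_nonneg hr (h.surp_nonneg hs hij))

theorem sub_le_reb (h : IsOutcome G w M γ) (hs : Stable G w M γ)
    (hr0 : ∀ i j, M i j → 0 ≤ r i j) (hik : G.Adj i k) (hM : ¬M i k) :
    w i k - γ k ≤ reb G w r M γ i := by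
  by_cases! hi : ∃ j, M i j
  · obtain ⟨j, hij⟩ := hi
    have hkj : k ≠ j := fun hkj => hM (hkj ▸ hij)
    exact (sub_le_bestAlt hik hkj).trans (h.bestAlt_le_reb hs hij (hr0 i j hij))
  · rw [reb_of_unmatched hi, ← h.eq_zero hi]
    exact sub_le_iff_le_add.2 (hs i k hik hM)

theorem isOutcome_reb (h : IsOutcome G w M γ) (hs : Stable G w M γ) (hw : ∀ i j, w i j = w j i)
    (hr0 : ∀ i j, M i j → 0 ≤ r i j) (hr1 : ∀ i j, M i j → r i j + r j i = 1) :
    IsOutcome G w M (reb G w r M γ) := by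
  refine ⟨h.isMatching, fun i => ?_, fun i j => reb_add_reb hw hr1 h.isMatching,
    fun i => reb_of_unmatched⟩
  by_cases! hi : ∃ j, M i j
  · obtain ⟨j, hij⟩ := hi
    exact bestAlt_nonneg.trans (h.bestAlt_le_reb hs hij (hr0 i j hij))
  · rw [reb_of_unmatched hi]

theorem stable_dampedReb (h : IsOutcome G w M γ) (hs : Stable G w M γ)
    (hw : ∀ i j, w i j = w j i) (hr0 : ∀ i j, M i j → 0 ≤ r i j)
    (hκ : κ ∈ Set.Icc (0 : ℝ) (1 / 2)) :
    Stable G w M (κ • reb G w r M γ + (1 - κ) • γ) := by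
  intro i k hik hM
  have hi : w i k - γ k ≤ reb G w r M γ i := h.sub_le_reb hs hr0 hik hM
  have hk : w i k - γ i ≤ reb G w r M γ k := by
    rw [hw i k]
    exact h.sub_le_reb hs hr0 hik.symm fun hki => hM (h.isMatching.symm k i hki)
  calc w i k = κ * (w i k - γ k) + κ * (w i k - γ i) + (1 - 2 * κ) * w i k +
          κ * (γ i + γ k) := by ring
    _ ≤ κ * reb G w r M γ i + κ * reb G w r M γ k + (1 - 2 * κ) * (γ i + γ k) +
          κ * (γ i + γ k) := by
        have hκ2 : 0 ≤ 1 - 2 * κ := by linarith [hκ.2]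
        have hκ0 := hκ.1
        gcongr
        exact hs i k hik hM
    _ = _ := by
        simp only [Pi.add_apply, Pi.smul_apply, smul_eq_mul]
        ring

theorem isOutcome_and_stable_rebIter (h : IsOutcome G w M γ) (hs : Stable G w M γ)
    (hw : ∀ i j, w i j = w j i) (hr0 : ∀ i j, M i j → 0 ≤ r i j)
    (hr1 : ∀ i j, M i j → r i j + r j i = 1) (hκ : κ ∈ Set.Icc (0 : ℝ) (1 / 2)) (t : ℕ) :
    IsOutcome G w M (rebIter G w r M κ γ t) ∧ Stable G w M (rebIter G w r M κ γ t) := by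
  induction t with
  | zero => exact ⟨h, hs⟩
  | succ t ih =>
    obtain ⟨ht, hst⟩ := ih
    exact ⟨(ht.isOutcome_reb hst hw hr0 hr1).convexCombo ht hκ.1 (by linarith [hκ.2]) (by ring),
      ht.stable_dampedReb hst hw hr0 hκ⟩

end IsOutcome

theorem norm_reb_sub_rebIter_le (hw : ∀ i j, w i j = w j i) (hW0 : 0 ≤ W)
    (hW : ∀ i j, M i j → w i j ≤ W) (hr0 : ∀ i j, M i j → 0 ≤ r i j)
    (hr1 : ∀ i j, M i j → r i j + r j i = 1) (h : IsOutcome G w M γ) (hs : Stable G w M γ)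
    (hκ : κ ∈ Set.Ioc (0 : ℝ) (1 / 2)) {t : ℕ} (ht : 0 < t) :
    ‖reb G w r M (rebIter G w r M κ γ t) - rebIter G w r M κ γ t‖ ≤
      W / √(Real.pi * (κ * (1 - κ)) * t) := by
  have hstable := h.isOutcome_and_stable_rebIter hs hw hr0 hr1 (Set.Ioc_subset_Icc_self hκ)
  have hbound (n : ℕ) : ‖reb G w r M (rebIter G w r M κ γ n) - rebIter G w r M κ γ 0‖ ≤ W :=
    ((hstable n).1.isOutcome_reb (hstable n).2 hw hr0 hr1).norm_sub_le h hW0 hW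
  exact norm_map_sub_self_le_div_sqrt (lipschitzWith_reb h.isMatching hr0 hr1)
    ⟨hκ.1, by linarith [hκ.2]⟩ (fun _ => rfl) hbound ht

theorem edge_rebalancing_converges_general (hw : ∀ i j, w i j = w j i) (hW0 : 0 < W)
    (hW : ∀ i j, M i j → w i j ≤ W) (hr0 : ∀ i j, M i j → 0 ≤ r i j)
    (hr1 : ∀ i j, M i j → r i j + r j i = 1) (h : IsOutcome G w M γ) (hs : Stable G w M γ)
    (hκ : κ ∈ Set.Ioc (0 : ℝ) (1 / 2)) {ε : ℝ} (hε : 0 < ε) {t : ℕ}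
    (ht : W ^ 2 / (Real.pi * κ * (1 - κ) * ε ^ 2) ≤ t) :
    (∀ i, |reb G w r M (rebIter G w r M κ γ t) i - rebIter G w r M κ γ t i| ≤ ε) ∧
      ∀ i j, M i j →
        |rebIter G w r M κ γ t i - bestAlt G w (rebIter G w r M κ γ t) i j -
          r i j * surp G w (rebIter G w r M κ γ t) i j| ≤ ε := by
  have hc : 0 < Real.pi * (κ * (1 - κ)) :=
    mul_pos Real.pi_pos (mul_pos hκ.1 (by linarith [hκ.2]))
  rw [mul_assoc Real.pi] at ht
  have ht0 : 0 < t := Nat.cast_pos.1 ((by positivity : (0 : ℝ) < _).trans_le ht)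
  have hres (i : V) :
      |reb G w r M (rebIter G w r M κ γ t) i - rebIter G w r M κ γ t i| ≤ ε :=
    (norm_le_pi_norm _ i).trans <| (norm_reb_sub_rebIter_le hw hW0.le hW hr0 hr1 h hs hκ ht0).trans
      (div_sqrt_le_of_sq_div_le hc hε ht)
  refine ⟨hres, fun i j hij => ?_⟩
  rw [sub_sub, abs_sub_comm, ← reb_of_matched h.isMatching hij]
  exact hres i

end Rebalancing

/-- With weights in `(0,1]`, starting Edge Rebalancing from a
stable trade outcome, within `⌈1/(π κ(1−κ) ε²)⌉` iterations some iterate moves by at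
most `ε` under rebalancing, and at such a time the outcome satisfies `ε`-correct
division. -/
theorem edge_rebalancing_converges
    {V : Type*} [Fintype V] [DecidableEq V] (G : SimpleGraph V) [DecidableRel G.Adj]
    (w : V → V → ℝ) (hw : GoodW G w) (hw1 : ∀ i j, G.Adj i j → w i j ≤ 1)
    (r : V → V → ℝ) (hr : GoodR G r)
    (M : V → V → Prop) (γ0 : V → ℝ)
    (h0 : IsOutcome G w M γ0 ∧ Stable G w M γ0)
    (κ : ℝ) (hκ : κ ∈ Set.Ioc (0 : ℝ) (1 / 2)) (ε : ℝ) (hε : 0 < ε) :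
    ∃ t : ℕ, t ≤ ⌈1 / (Real.pi * κ * (1 - κ) * ε ^ 2)⌉₊ ∧
      (∀ i, |reb G w r M (rebIter G w r M κ γ0 t) i - rebIter G w r M κ γ0 t i| ≤ ε) ∧
      ∀ i j, M i j →
        |rebIter G w r M κ γ0 t i - bestAlt G w (rebIter G w r M κ γ0 t) i j -
          r i j * surp G w (rebIter G w r M κ γ0 t) i j| ≤ ε := by
  have hM := h0.1.isMatching
  exact ⟨_, le_rfl, edge_rebalancing_converges_general hw.1 one_pos
    (fun i j hij => hw1 i j (hM.subset i j hij)) (fun i j hij => (hr i j (hM.subset i j hij)).1.le)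
    (fun i j hij => (hr i j (hM.subset i j hij)).2.2) h0.1 h0.2 hκ hε
    (by simpa only [one_pow] using Nat.le_ceil _)⟩

end EN
end

section
/- Let G=(V,E) be a graph with positive edge weights (w_{ij}) (no multiple edges) and integer capacity constraints b = (b_i)_{i∈V}, such that the primal LP for maximum weight b-matching has a unique optimum and this optimum is integral. Then the instance possesses a Nash bargaining solution: there exists a trade outcome (M, Γ) that is both stable and balanced. -/
namespace EN

open Finset

variable {V : Type*}

variable [Fintype V] [DecidableEq V]

/-- Degree of `i` in the relation `M`. -/
noncomputable def bdeg {V : Type*} (M : V → V → Prop) (i : V) : ℕ := {j | M i j}.ncard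

/-- `M` is a `b`-matching of `G`. -/
def IsBMatching {V : Type*} (G : SimpleGraph V) (b : V → ℕ) (M : V → V → Prop) : Prop :=
  (∀ i j, M i j → G.Adj i j) ∧ (∀ i j, M i j → M j i) ∧ ∀ i, bdeg M i ≤ b i

open Classical in
/-- The earnings `γ_i` of node `i` under the outcome `(M, Γ)`: the minimum incoming
payoff over partners if `i` is saturated, and `0` otherwise. -/
noncomputable def bEarn {V : Type*} (b : V → ℕ) (M : V → V → Prop) (Γ : V → V → ℝ)
    (i : V) : ℝ :=
  if bdeg M i = b i then sInf {x : ℝ | ∃ j, M i j ∧ x = Γ j i} else 0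

/-- The `b`-th largest value of `f` over the finite vertex set `s`
(`0` if `s` has fewer than `b` elements or `b = 0`). -/
noncomputable def bmax {V : Type*} (b : ℕ) (s : Finset V) (f : V → ℝ) : ℝ :=
  if b ≠ 0 ∧ b ≤ s.card then ((s.val.map f).sort (· ≤ ·)).getD (s.card - b) 0 else 0

/-- `(M, Γ)` is a trade outcome for the instance with capacities `b`. -/
def IsBOutcome {V : Type*} (G : SimpleGraph V) (w : V → V → ℝ) (b : V → ℕ)
    (M : V → V → Prop) (Γ : V → V → ℝ) : Prop :=
  IsBMatching G b M ∧ (∀ i j, ¬M i j → Γ i j = 0) ∧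
    ∀ i j, M i j → 0 ≤ Γ i j ∧ Γ i j + Γ j i = w i j

/-- Stability of a trade outcome with capacities. -/
def BStable {V : Type*} (G : SimpleGraph V) (w : V → V → ℝ) (b : V → ℕ)
    (M : V → V → Prop) (Γ : V → V → ℝ) : Prop :=
  ∀ i j, G.Adj i j → ¬M i j → w i j ≤ bEarn b M Γ i + bEarn b M Γ j

/-- Balance of a trade outcome with capacities. -/
def BBalanced {V : Type*} [Fintype V] [DecidableEq V] (G : SimpleGraph V)
    [DecidableRel G.Adj] (w : V → V → ℝ) (b : V → ℕ)
    (M : V → V → Prop) (Γ : V → V → ℝ) : Prop :=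
  ∀ i j, M i j →
    Γ j i - bmax (b i) ((G.neighborFinset i).erase j)
        (fun k => pos (w i k - bEarn b M Γ k)) =
      Γ i j - bmax (b j) ((G.neighborFinset j).erase i)
        (fun l => pos (w j l - bEarn b M Γ l))

/-- Feasible point of the primal LP for maximum weight `b`-matching. -/
def BLPFeasible {V : Type*} [Fintype V] [DecidableEq V] (G : SimpleGraph V)
    [DecidableRel G.Adj] (b : V → ℕ) (x : V → V → ℝ) : Prop :=
  (∀ i j, x i j = x j i) ∧ (∀ i j, 0 ≤ x i j) ∧ (∀ i j, x i j ≤ 1) ∧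
    (∀ i j, ¬G.Adj i j → x i j = 0) ∧
    ∀ i, ∑ j ∈ G.neighborFinset i, x i j ≤ (b i : ℝ)

/-- Optimal point of the primal LP for maximum weight `b`-matching. -/
def BLPOptimal {V : Type*} [Fintype V] [DecidableEq V] (G : SimpleGraph V)
    [DecidableRel G.Adj] (w : V → V → ℝ) (b : V → ℕ) (x : V → V → ℝ) : Prop :=
  BLPFeasible G b x ∧ ∀ y, BLPFeasible G b y → LPval G w y ≤ LPval G w x

/-!
The stable outcomes on a fixed `b`-matching `M` form a compact convex set of payoff vectors. Edge
rebalancing, whose fixed points are the balanced outcomes, is a nonexpansive map of this set into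
itself, so a Nash bargaining solution exists as soon as `M` has a stable outcome. For the
`b`-matching of an integral optimum of the linear program, the multipliers of the capacity
constraints provide one: every node is paid its multiplier on each of its trades, and the surplus
`w i j - y i - y j ≥ 0` of a traded edge is split equally.
-/

section OrderStatistic

variable {α : Type*} {b : ℕ} {s : Finset α} {f g : α → ℝ} {c ε : ℝ}

theorem lt_getElem_iff_countP_le {β : Type*} [LinearOrder β] {l : List β}
    (hl : l.Pairwise (· ≤ ·)) {n : ℕ} (hn : n < l.length) (c : β) :
    c < l[n] ↔ l.countP (· ≤ c) ≤ n := by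
  induction l generalizing n with
  | nil => simp at hn
  | cons a t ih =>
    obtain ⟨ha, ht⟩ := List.pairwise_cons.1 hl
    rcases le_or_gt a c with hac | hca
    · cases n with
      | zero => simp [hac]
      | succ n => simp [hac, ih ht (by simpa using hn)]
    · have hall : ∀ x ∈ a :: t, c < x :=
        List.forall_mem_cons.2 ⟨hca, fun x hx => hca.trans_le (ha x hx)⟩
      have hcount : (a :: t).countP (· ≤ c) = 0 :=
        List.countP_eq_zero.2 fun x hx => by simpa using hall x hx
      simp only [hcount, Nat.zero_le, iff_true]
      exact hall _ (List.getElem_mem hn)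

theorem bmax_eq_zero (h : ¬(b ≠ 0 ∧ b ≤ #s)) : bmax b s f = 0 := if_neg h

theorem lt_bmax_iff (hb : b ≠ 0) (hs : b ≤ #s) :
    c < bmax b s f ↔ b ≤ #{k ∈ s | c < f k} := by
  set l := (s.val.map f).sort (· ≤ ·) with hl
  have hlen : l.length = #s := by simp [hl]
  have hcount : l.countP (· ≤ c) = #{k ∈ s | f k ≤ c} := by
    rw [← Multiset.coe_countP, hl, Multiset.sort_eq, Multiset.countP_map]
    rfl
  have hsplit : #{k ∈ s | f k ≤ c} + #{k ∈ s | c < f k} = #s := by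
    simpa only [not_le] using card_filter_add_card_filter_not (s := s) (fun k => f k ≤ c)
  have hindex : #s - b < l.length := by omega
  have hbmax : bmax b s f = l[#s - b] :=
    (if_pos ⟨hb, hs⟩).trans (List.getD_eq_getElem _ _ hindex)
  rw [hbmax, lt_getElem_iff_countP_le (Multiset.pairwise_sort _ _) hindex, hcount]
  omega

theorem le_bmax {t : Finset α} (hb : b ≠ 0) (hts : t ⊆ s) (ht : b ≤ #t)
    (h : ∀ k ∈ t, c ≤ f k) : c ≤ bmax b s f := by
  refine le_of_forall_lt fun c' hc' => (lt_bmax_iff hb (ht.trans (card_le_card hts))).2 ?_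
  exact ht.trans (card_le_card fun k hk => mem_filter.2 ⟨hts hk, hc'.trans_le (h k hk)⟩)

theorem bmax_le (hc : 0 ≤ c) (h : #{k ∈ s | c < f k} < b) : bmax b s f ≤ c := by
  by_cases hbs : b ≠ 0 ∧ b ≤ #s
  · exact not_lt.1 fun hlt => h.not_ge ((lt_bmax_iff hbs.1 hbs.2).1 hlt)
  · rwa [bmax_eq_zero hbs]

theorem bmax_nonneg (hf : ∀ k ∈ s, 0 ≤ f k) : 0 ≤ bmax b s f := by
  by_cases hbs : b ≠ 0 ∧ b ≤ #s
  · exact le_bmax hbs.1 subset_rfl hbs.2 hf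
  · rw [bmax_eq_zero hbs]

theorem bmax_le_bmax_add (hε : 0 ≤ ε) (h : ∀ k ∈ s, f k ≤ g k + ε) :
    bmax b s f ≤ bmax b s g + ε := by
  by_cases hbs : b ≠ 0 ∧ b ≤ #s
  · rw [← sub_le_iff_le_add]
    refine le_of_forall_lt fun c hc => (lt_bmax_iff hbs.1 hbs.2).2 ?_
    refine ((lt_bmax_iff hbs.1 hbs.2).1 (lt_sub_iff_add_lt.1 hc)).trans (card_le_card ?_)
    exact monotone_filter_right s fun k hk hck => lt_of_add_lt_add_right (hck.trans_le (h k hk))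
  · simpa only [bmax_eq_zero hbs, zero_add]

end OrderStatistic

section FixedPoint

variable {E : Type*} [NormedAddCommGroup E] [NormedSpace ℝ E] {K : Set E} {T : E → E} {x₀ : E}

theorem exists_homothety_eq_self (hK : IsComplete K) (hstar : StarConvex ℝ x₀ K)
    (hne : K.Nonempty) (hmaps : Set.MapsTo T K K) (hlip : LipschitzOnWith 1 T K) {t : ℝ}
    (ht : t ∈ Set.Ioc 0 1) : ∃ z ∈ K, AffineMap.homothety x₀ (1 - t) (T z) = z := by
  have hr : 0 ≤ 1 - t := sub_nonneg.2 ht.2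
  have hself : Set.MapsTo (fun z => AffineMap.homothety x₀ (1 - t) (T z)) K K := fun z hz => by
    change AffineMap.homothety x₀ (1 - t) (T z) ∈ K
    rw [AffineMap.homothety_eq_lineMap]
    exact starConvex_iff_segment_subset.1 hstar (hmaps hz)
      (segment_eq_image_lineMap ℝ x₀ (T z) ▸ Set.mem_image_of_mem _ ⟨hr, by linarith [ht.1]⟩)
  have hcontr : ContractingWith (1 - t).toNNReal (hself.restrict _ K K) := by
    refine ⟨Real.toNNReal_lt_one.2 (by linarith [ht.1]), LipschitzWith.of_dist_le_mul ?_⟩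
    rintro ⟨y, hy⟩ ⟨z, hz⟩
    change dist (AffineMap.homothety x₀ (1 - t) (T y)) (AffineMap.homothety x₀ (1 - t) (T z)) ≤
      (1 - t).toNNReal * dist y z
    simpa [AffineMap.homothety_apply, dist_smul₀, Real.coe_toNNReal _ hr, abs_of_nonneg hr] using
      mul_le_mul_of_nonneg_left (hlip.dist_le_mul y hy z hz) hr
  obtain ⟨z, hz, hfix, -⟩ :=
    hcontr.exists_fixedPoint' hK hself hne.some_mem (edist_ne_top _ _)
  exact ⟨z, hz, hfix⟩

theorem exists_eq_self_of_lipschitzOnWith_one (hK : IsCompact K) (hstar : StarConvex ℝ x₀ K)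
    (hne : K.Nonempty) (hmaps : Set.MapsTo T K K) (hlip : LipschitzOnWith 1 T K) :
    ∃ x ∈ K, T x = x := by
  obtain ⟨x, hx, hmin⟩ := hK.exists_isMinOn hne (f := fun x => dist (T x) x)
    (continuous_dist.comp_continuousOn (hlip.continuousOn.prodMk continuousOn_id))
  have hdisp : ∀ t ∈ Set.Ioc (0 : ℝ) 1, dist (T x) x ≤ t * Metric.diam K := fun t ht => by
    obtain ⟨z, hz, hfix⟩ := exists_homothety_eq_self hK.isComplete hstar hne hmaps hlip ht
    calc dist (T x) x ≤ dist (T z) z := hmin hz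
      _ = t * dist x₀ (T z) := by
        nth_rw 2 [← hfix]
        rw [dist_self_homothety, sub_sub_cancel, Real.norm_of_nonneg ht.1.le]
      _ ≤ t * Metric.diam K := mul_le_mul_of_nonneg_left
        (Metric.dist_le_diam_of_mem hK.isBounded (hstar.mem hne) (hmaps hz)) ht.1.le
  have hlim : Filter.Tendsto (fun t : ℝ => t * Metric.diam K) (nhdsWithin 0 (Set.Ioi 0)) (nhds 0) :=
    ((continuous_mul_const _).tendsto' 0 0 (zero_mul _)).mono_left nhdsWithin_le_nhds
  refine ⟨x, hx, dist_le_zero.1 (ge_of_tendsto hlim ?_)⟩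
  filter_upwards [Ioc_mem_nhdsGT zero_lt_one] using hdisp

end FixedPoint

section Lagrange

variable {E ι : Type*} {K : Set E} {f : E → ℝ} {g : ι → E → ℝ}

/-- The strict hypograph of the perturbation function of the program "maximize `f` over `x ∈ K`
subject to `g i x ≤ 0`": the pairs `(u, r)` for which the value `r` is strictly beaten by a point
strictly satisfying the constraints `g i x < u i`. Strictness makes this set open. -/
def perturbationHypograph (K : Set E) (f : E → ℝ) (g : ι → E → ℝ) : Set ((ι → ℝ) × ℝ) :=
  {p | ∃ x ∈ K, (∀ i, g i x < p.1 i) ∧ p.2 < f x}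

theorem isOpen_perturbationHypograph [Finite ι] : IsOpen (perturbationHypograph K f g) := by
  have hunion : perturbationHypograph K f g =
      ⋃ x ∈ K, (⋂ i, {p | g i x < p.1 i}) ∩ {p | p.2 < f x} := by
    ext p
    simp only [perturbationHypograph, Set.mem_ofPred_eq, Set.mem_iUnion, Set.mem_inter_iff,
      Set.mem_iInter, exists_prop]
  rw [hunion]
  refine isOpen_biUnion fun x _ => (isOpen_iInter_of_finite fun i => ?_).inter ?_
  · exact isOpen_lt continuous_const (by fun_prop)
  · exact isOpen_lt continuous_snd continuous_const

variable [AddCommGroup E] [Module ℝ E]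

theorem convex_perturbationHypograph (hf : ConcaveOn ℝ K f) (hg : ∀ i, ConvexOn ℝ K (g i)) :
    Convex ℝ (perturbationHypograph K f g) := by
  rintro p ⟨x, hx, hgx, hfx⟩ q ⟨y, hy, hgy, hfy⟩ s t hs ht hst
  have combo_lt {a a' c c' : ℝ} (h : a < c) (h' : a' < c') :
      s • a + t • a' < s • c + t • c' := by
    have := convex_Ioi (0 : ℝ) (sub_pos.2 h) (sub_pos.2 h') hs ht hst
    simp only [Set.mem_Ioi, smul_eq_mul] at this ⊢
    linarith
  refine ⟨s • x + t • y, hf.1 hx hy hs ht hst, fun i => ?_, ?_⟩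
  · exact ((hg i).2 hx hy hs ht hst).trans_lt (combo_lt (hgx i) (hgy i))
  · exact (combo_lt hfx hfy).trans_le (hf.2 hx hy hs ht hst)

theorem exists_separating_multipliers [Fintype ι] (hf : ConcaveOn ℝ K f)
    (hg : ∀ i, ConvexOn ℝ K (g i)) {v : ℝ} (hv : ∀ x ∈ K, (∀ i, g i x ≤ 0) → f x ≤ v) :
    ∃ (a : ι → ℝ) (μ : ℝ), ∀ u r, (u, r) ∈ perturbationHypograph K f g →
      ∑ i, u i * a i + r * μ < v * μ := by
  classical
  have hnot : ((0 : ι → ℝ), v) ∉ perturbationHypograph K f g := fun ⟨x, hx, hgx, hfx⟩ =>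
    (hv x hx fun i => (hgx i).le).not_gt hfx
  obtain ⟨F, hF⟩ := geometric_hahn_banach_open_point (convex_perturbationHypograph hf hg)
    isOpen_perturbationHypograph hnot
  have hsplit : ∀ u r, F (u, r) =
      ∑ i, u i * F (fun j => if i = j then 1 else 0, 0) + r * F (0, 1) := fun u r => by
    have hur : (u, r) = (u, 0) + r • ((0 : ι → ℝ), (1 : ℝ)) := by ext <;> simp
    rw [hur, map_add, map_smul, smul_eq_mul]
    exact congrArg (· + _) ((F.comp (.inl ℝ (ι → ℝ) ℝ)).pi_apply_eq_sum_univ u)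
  refine ⟨fun i => F (fun j => if i = j then 1 else 0, 0), F (0, 1), fun u r hur => ?_⟩
  have hlt := hF _ hur
  rw [hsplit u r, hsplit 0 v] at hlt
  simpa only [Pi.zero_apply, zero_mul, sum_const_zero, zero_add] using hlt

theorem nonpos_of_forall_mul_add_lt {a c d : ℝ} (h : ∀ s, 0 ≤ s → s * a + c < d) : a ≤ 0 := by
  by_contra! ha
  have hcd : c < d := by simpa using h 0 le_rfl
  have := h ((d - c) / a) (div_nonneg (sub_nonneg.2 hcd.le) ha.le)
  rw [div_mul_cancel₀ _ ha.ne', sub_add_cancel] at this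
  exact this.false

theorem exists_lagrange_multipliers [Fintype ι] (hf : ConcaveOn ℝ K f)
    (hg : ∀ i, ConvexOn ℝ K (g i)) (slater : ∃ x ∈ K, ∀ i, g i x < 0) {v : ℝ}
    (hv : ∀ x ∈ K, (∀ i, g i x ≤ 0) → f x ≤ v) :
    ∃ y : ι → ℝ, (∀ i, 0 ≤ y i) ∧ ∀ x ∈ K, f x - ∑ i, y i * g i x ≤ v := by
  classical
  obtain ⟨x₀, hx₀, hgx₀⟩ := slater
  have hfx₀ : f x₀ ≤ v := hv x₀ hx₀ fun i => (hgx₀ i).le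
  obtain ⟨a, μ, hsep⟩ := exists_separating_multipliers hf hg hv
  have hμ : 0 < μ := by
    have := hsep 0 (f x₀ - 1) ⟨x₀, hx₀, hgx₀, sub_one_lt _⟩
    simp only [Pi.zero_apply, zero_mul, sum_const_zero, zero_add] at this
    nlinarith
  have ha : ∀ i, a i ≤ 0 := fun i => nonpos_of_forall_mul_add_lt fun s hs => by
    have hshift : (0 : ι → ℝ) ≤ Pi.single i s := Pi.single_nonneg.2 hs
    simpa [Pi.single_apply] using hsep (Pi.single i s) (f x₀ - 1)
      ⟨x₀, hx₀, fun k => (hgx₀ k).trans_le (hshift k), sub_one_lt _⟩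
  have hclosure : ∀ x ∈ K, ∑ i, g i x * a i + f x * μ ≤ v * μ := fun x hx => by
    have hlim : Filter.Tendsto (fun ε : ℝ => ∑ i, (g i x + ε) * a i + (f x - ε) * μ)
        (nhdsWithin 0 (Set.Ioi 0)) (nhds (∑ i, g i x * a i + f x * μ)) :=
      ((by fun_prop : Continuous _).tendsto' _ _ (by simp)).mono_left nhdsWithin_le_nhds
    refine le_of_tendsto hlim (eventually_mem_nhdsWithin.mono fun ε hε => (hsep _ _ ?_).le)
    exact ⟨x, hx, fun i => lt_add_of_pos_right _ hε, sub_lt_self _ hε⟩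
  refine ⟨fun i => -a i / μ, fun i => div_nonneg (neg_nonneg.2 (ha i)) hμ.le, fun x hx => ?_⟩
  have hsum : ∑ i, -a i / μ * g i x = -((∑ i, g i x * a i) / μ) := by
    rw [sum_div, ← sum_neg_distrib]
    exact sum_congr rfl fun i _ => by ring
  rw [hsum, sub_neg_eq_add, ← le_sub_iff_add_le', div_le_iff₀ hμ]
  linarith [hclosure x hx]

theorem exists_kkt_multipliers [Fintype ι] (hf : ConcaveOn ℝ K f) (hg : ∀ i, ConvexOn ℝ K (g i))
    (slater : ∃ x ∈ K, ∀ i, g i x < 0) {x₀ : E} (hx₀ : x₀ ∈ {x ∈ K | ∀ i, g i x ≤ 0})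
    (hmax : IsMaxOn f {x ∈ K | ∀ i, g i x ≤ 0} x₀) :
    ∃ y : ι → ℝ, (∀ i, 0 ≤ y i) ∧ (∀ i, y i * g i x₀ = 0) ∧
      IsMaxOn (fun x => f x - ∑ i, y i * g i x) K x₀ := by
  obtain ⟨hx₀K, hgx₀⟩ := hx₀
  obtain ⟨y, hy, hL⟩ := exists_lagrange_multipliers hf hg slater
    (fun x hx hgx => hmax ⟨hx, hgx⟩)
  have hterm : ∀ i ∈ univ, y i * g i x₀ ≤ 0 := fun i _ =>
    mul_nonpos_of_nonneg_of_nonpos (hy i) (hgx₀ i)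
  have hsum : ∑ i, y i * g i x₀ = 0 :=
    le_antisymm (sum_nonpos hterm) (by linarith [hL x₀ hx₀K])
  refine ⟨y, hy, fun i => (sum_eq_zero_iff_of_nonpos hterm).1 hsum i (mem_univ i), fun x hx => ?_⟩
  simpa only [Set.mem_ofPred_eq, hsum, sub_zero] using hL x hx

end Lagrange

section Earnings

variable {V : Type*} {G : SimpleGraph V} {w : V → V → ℝ} {b : V → ℕ} {M : V → V → Prop}
  {Γ Γ' : V → V → ℝ} {i j : V}

theorem le_pos (x : ℝ) : x ≤ pos x := le_max_left _ _

theorem pos_nonneg (x : ℝ) : 0 ≤ pos x := le_max_right _ _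

theorem pos_le_pos_add {x y ε : ℝ} (hε : 0 ≤ ε) (h : x ≤ y + ε) : pos x ≤ pos y + ε :=
  max_le (h.trans (add_le_add_left (le_pos y) ε)) (add_nonneg (pos_nonneg y) hε)

theorem bdeg_eq_card_filter [Fintype V] [DecidablePred (M i)] : bdeg M i = #{j | M i j} := by
  simp [bdeg, Set.ncard_eq_toFinset_card']

theorem bEarn_of_bdeg_ne (h : bdeg M i ≠ b i) : bEarn b M Γ i = 0 := if_neg h

theorem bEarn_eq_zero_or (b : V → ℕ) (M : V → V → Prop) (i : V) :
    (∀ Γ, bEarn b M Γ i = 0) ∨ bdeg M i = b i ∧ ∃ j, M i j := by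
  by_cases hsat : bdeg M i = b i
  · refine (em (∃ j, M i j)).symm.imp (fun hnone Γ => ?_) fun hne => ⟨hsat, hne⟩
    push Not at hnone
    simp [bEarn, hnone]
  · exact .inl fun Γ => bEarn_of_bdeg_ne hsat

theorem le_bEarn_iff [Finite V] (hsat : bdeg M i = b i) (hne : ∃ j, M i j) {c : ℝ} :
    c ≤ bEarn b M Γ i ↔ ∀ j, M i j → c ≤ Γ j i := by
  have hfin : {x | ∃ j, M i j ∧ x = Γ j i}.Finite :=
    (Set.finite_range fun j => Γ j i).subset fun x ⟨j, _, hx⟩ => ⟨j, hx.symm⟩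
  obtain ⟨j, hij⟩ := hne
  rw [bEarn, if_pos hsat, le_csInf_iff hfin.bddBelow ⟨_, j, hij, rfl⟩]
  exact ⟨fun h j hij => h _ ⟨j, hij, rfl⟩, fun h x ⟨j, hij, hx⟩ => hx ▸ h j hij⟩

theorem bEarn_le_of_saturated [Finite V] (hsat : bdeg M i = b i) (hij : M i j) :
    bEarn b M Γ i ≤ Γ j i :=
  (le_bEarn_iff hsat ⟨j, hij⟩).1 le_rfl j hij

theorem add_bEarn_le_bEarn_add [Finite V] {s t : ℝ} (hs : 0 ≤ s) (ht : 0 ≤ t) :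
    s * bEarn b M Γ i + t * bEarn b M Γ' i ≤ bEarn b M (s • Γ + t • Γ') i := by
  rcases bEarn_eq_zero_or b M i with hzero | ⟨hsat, hne⟩
  · simp only [hzero, mul_zero, add_zero, le_refl]
  · exact (le_bEarn_iff hsat hne).2 fun j hij =>
      add_le_add (mul_le_mul_of_nonneg_left (bEarn_le_of_saturated hsat hij) hs)
        (mul_le_mul_of_nonneg_left (bEarn_le_of_saturated hsat hij) ht)

theorem abs_apply_sub_apply_le_dist {α β : Type*} [Fintype α] [Fintype β] (f g : α → β → ℝ)
    (i : α) (j : β) : |f i j - g i j| ≤ dist f g :=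
  (dist_le_pi_dist (f i) (g i) j).trans (dist_le_pi_dist f g i)

theorem bEarn_le_bEarn_add_dist [Fintype V] (Γ Γ' : V → V → ℝ) (i : V) :
    bEarn b M Γ i ≤ bEarn b M Γ' i + dist Γ Γ' := by
  rcases bEarn_eq_zero_or b M i with hzero | ⟨hsat, hne⟩
  · simpa only [hzero, zero_add] using dist_nonneg
  · rw [← sub_le_iff_le_add, le_bEarn_iff hsat hne]
    intro j hij
    linarith [bEarn_le_of_saturated (Γ := Γ) hsat hij,
      (abs_le.1 (abs_apply_sub_apply_le_dist Γ Γ' j i)).2]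

theorem continuous_bEarn [Finite V] (i : V) : Continuous fun Γ => bEarn b M Γ i :=
  have := Fintype.ofFinite V
  (LipschitzWith.of_le_add fun Γ Γ' => bEarn_le_bEarn_add_dist Γ Γ' i).continuous

theorem IsBOutcome.symm (h : IsBOutcome G w b M Γ) (hij : M i j) : M j i := h.1.2.1 i j hij

theorem IsBOutcome.nonneg (h : IsBOutcome G w b M Γ) (i j : V) : 0 ≤ Γ i j := by
  by_cases hij : M i j
  · exact (h.2.2 i j hij).1
  · exact (h.2.1 i j hij).ge

theorem IsBOutcome.bEarn_nonneg [Finite V] (h : IsBOutcome G w b M Γ) (i : V) :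
    0 ≤ bEarn b M Γ i := by
  rcases bEarn_eq_zero_or b M i with hzero | ⟨hsat, hne⟩
  · exact (hzero Γ).ge
  · exact (le_bEarn_iff hsat hne).2 fun j _ => h.nonneg j i

theorem IsBOutcome.bEarn_le [Finite V] (h : IsBOutcome G w b M Γ) (hij : M i j) :
    bEarn b M Γ i ≤ Γ j i := by
  by_cases hsat : bdeg M i = b i
  · exact bEarn_le_of_saturated hsat hij
  · exact (bEarn_of_bdeg_ne hsat).trans_le (h.nonneg j i)

end Earnings

section StableOutcomes

variable {V : Type*} {G : SimpleGraph V} {w : V → V → ℝ} {b : V → ℕ} {M : V → V → Prop}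

/-- The payoff vectors that form a stable trade outcome with the `b`-matching `M`. -/
def stableOutcomes (G : SimpleGraph V) (w : V → V → ℝ) (b : V → ℕ) (M : V → V → Prop) :
    Set (V → V → ℝ) :=
  {Γ | IsBOutcome G w b M Γ ∧ BStable G w b M Γ}

variable [Finite V]

theorem convex_stableOutcomes : Convex ℝ (stableOutcomes G w b M) := by
  rintro Γ ⟨⟨hM, hoff, hpay⟩, hstab⟩ Γ' ⟨⟨-, hoff', hpay'⟩, hstab'⟩ s t hs ht hst
  refine ⟨⟨hM, fun i j hij => ?_, fun i j hij => ?_⟩, fun i j hadj hij => ?_⟩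
  · simp [hoff i j hij, hoff' i j hij]
  · obtain ⟨hnn, hsum⟩ := hpay i j hij
    obtain ⟨hnn', hsum'⟩ := hpay' i j hij
    refine ⟨add_nonneg (mul_nonneg hs hnn) (mul_nonneg ht hnn'), ?_⟩
    calc s * Γ i j + t * Γ' i j + (s * Γ j i + t * Γ' j i)
        = s * (Γ i j + Γ j i) + t * (Γ' i j + Γ' j i) := by ring
      _ = w i j := by rw [hsum, hsum', ← add_mul, hst, one_mul]
  · calc w i j = s * w i j + t * w i j := by rw [← add_mul, hst, one_mul]
      _ ≤ s * (bEarn b M Γ i + bEarn b M Γ j) + t * (bEarn b M Γ' i + bEarn b M Γ' j) :=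
        add_le_add (mul_le_mul_of_nonneg_left (hstab i j hadj hij) hs)
          (mul_le_mul_of_nonneg_left (hstab' i j hadj hij) ht)
      _ = s * bEarn b M Γ i + t * bEarn b M Γ' i +
          (s * bEarn b M Γ j + t * bEarn b M Γ' j) := by ring
      _ ≤ bEarn b M (s • Γ + t • Γ') i + bEarn b M (s • Γ + t • Γ') j :=
        add_le_add (add_bEarn_le_bEarn_add hs ht) (add_bEarn_le_bEarn_add hs ht)

theorem isClosed_stableOutcomes : IsClosed (stableOutcomes G w b M) := by
  have hentry : ∀ i j : V, Continuous fun Γ : V → V → ℝ => Γ i j := fun i j => by fun_prop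
  simp only [stableOutcomes, IsBOutcome, BStable, Set.ofPred_and, Set.ofPred_forall]
  refine (isClosed_const.inter (.inter ?_ ?_)).inter ?_ <;>
    refine isClosed_iInter fun i => isClosed_iInter fun j => isClosed_iInter fun _ => ?_
  · exact isClosed_eq (hentry i j) continuous_const
  · exact (isClosed_le continuous_const (hentry i j)).inter
      (isClosed_eq ((hentry i j).add (hentry j i)) continuous_const)
  · exact isClosed_iInter fun _ =>
      isClosed_le continuous_const ((continuous_bEarn i).add (continuous_bEarn j))

theorem isCompact_stableOutcomes : IsCompact (stableOutcomes G w b M) := by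
  classical
  refine (isCompact_Icc (a := 0) (b := fun i j => if M i j then w i j else 0)).of_isClosed_subset
    isClosed_stableOutcomes fun Γ ⟨hΓ, _⟩ => ⟨hΓ.nonneg, fun i j => ?_⟩
  change Γ i j ≤ if M i j then w i j else 0
  split_ifs with hij
  · linarith [(hΓ.2.2 i j hij).2, hΓ.nonneg j i]
  · exact (hΓ.2.1 i j hij).le

end StableOutcomes

section Rebalancing

variable {V : Type*} [Fintype V] [DecidableEq V] {G : SimpleGraph V} [DecidableRel G.Adj]
  {w : V → V → ℝ} {b : V → ℕ} {M : V → V → Prop} {Γ : V → V → ℝ} {i j k : V}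

/-- The best alternative of `i` to its trade with `j`: the `b i`-th largest of the values
`(w i k - γ k)₊` over its other neighbors `k`, as it enters `BBalanced`. -/
noncomputable def bBestAlt (G : SimpleGraph V) [DecidableRel G.Adj] (w : V → V → ℝ) (b : V → ℕ)
    (M : V → V → Prop) (Γ : V → V → ℝ) (i j : V) : ℝ :=
  bmax (b i) ((G.neighborFinset i).erase j) fun k => pos (w i k - bEarn b M Γ k)

theorem bBestAlt_nonneg : 0 ≤ bBestAlt G w b M Γ i j := bmax_nonneg fun _ _ => pos_nonneg _

theorem bBestAlt_le_bBestAlt_add_dist (Γ Γ' : V → V → ℝ) (i j : V) :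
    bBestAlt G w b M Γ i j ≤ bBestAlt G w b M Γ' i j + dist Γ Γ' :=
  bmax_le_bmax_add dist_nonneg fun k _ => pos_le_pos_add dist_nonneg <| by
    linarith [dist_comm Γ Γ', bEarn_le_bEarn_add_dist (b := b) (M := M) Γ' Γ k]

theorem bBestAlt_le_bEarn (h : Γ ∈ stableOutcomes G w b M) (hij : M i j) :
    bBestAlt G w b M Γ i j ≤ bEarn b M Γ i := by
  classical
  obtain ⟨hΓ, hstab⟩ := h
  have hsub : {k ∈ (G.neighborFinset i).erase j | bEarn b M Γ i < pos (w i k - bEarn b M Γ k)} ⊆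
      ({k | M i k} : Finset V).erase j := fun k hk => by
    simp only [mem_filter, mem_erase, SimpleGraph.mem_neighborFinset, mem_univ, true_and] at hk ⊢
    obtain ⟨⟨hkj, hadj⟩, hlt⟩ := hk
    refine ⟨hkj, by_contra fun hik => hlt.not_ge (max_le ?_ (hΓ.bEarn_nonneg i))⟩
    exact sub_le_iff_le_add.2 (hstab i k hadj hik)
  refine bmax_le (hΓ.bEarn_nonneg i) ?_
  calc _ ≤ #(({k | M i k} : Finset V).erase j) := card_le_card hsub
    _ < bdeg M i := by
      rw [bdeg_eq_card_filter]
      exact card_erase_lt_of_mem (mem_filter.2 ⟨mem_univ j, hij⟩)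
    _ ≤ b i := hΓ.1.2.2 i

theorem sub_bEarn_le_bBestAlt (h : Γ ∈ stableOutcomes G w b M) (hsat : bdeg M i = b i)
    (hij : M i j) (hadj : G.Adj i k) (hik : ¬M i k) :
    w i k - bEarn b M Γ k ≤ bBestAlt G w b M Γ i j := by
  classical
  obtain ⟨hΓ, hstab⟩ := h
  set P : Finset V := {l | M i l}
  have hjP : j ∈ P := mem_filter.2 ⟨mem_univ j, hij⟩
  have hkP : k ∉ P.erase j := fun hk => hik (mem_filter.1 (mem_of_mem_erase hk)).2
  have hcard : #P = b i := by rw [← hsat, bdeg_eq_card_filter]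
  -- the trading partners of `i` other than `j`, together with `k`, are `b i` alternatives
  refine le_bmax (t := insert k (P.erase j)) (hcard ▸ (card_pos.2 ⟨j, hjP⟩).ne') ?_ ?_ ?_
  · refine insert_subset (by simpa [hadj] using fun hkj : k = j => hik (hkj ▸ hij)) ?_
    exact erase_subset_erase j fun l hl =>
      (G.mem_neighborFinset i l).2 (hΓ.1.1 i l (mem_filter.1 hl).2)
  · rw [card_insert_of_notMem hkP, card_erase_add_one hjP, hcard]
  · refine fun l hl => le_trans ?_ (le_pos _)
    rcases mem_insert.1 hl with rfl | hl
    · exact le_rfl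
    · have hil : M i l := (mem_filter.1 (mem_of_mem_erase hl)).2
      linarith [hstab i k hadj hik, hΓ.bEarn_le hil, hΓ.bEarn_le (hΓ.symm hil),
        (hΓ.2.2 i l hil).2]

open Classical in
/-- Edge rebalancing: every traded edge splits its weight so that both ends gain equally over
their best alternatives to the trade. Its fixed points are the balanced outcomes. As in `bEarn`,
`Γ j i` is what `i` receives from `j`. -/
noncomputable def rebalance (G : SimpleGraph V) [DecidableRel G.Adj] (w : V → V → ℝ) (b : V → ℕ)
    (M : V → V → Prop) (Γ : V → V → ℝ) : V → V → ℝ := fun j i =>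
  if M i j then (w i j + bBestAlt G w b M Γ i j - bBestAlt G w b M Γ j i) / 2 else 0

theorem rebalance_apply_of_matched (hij : M i j) : rebalance G w b M Γ j i =
    (w i j + bBestAlt G w b M Γ i j - bBestAlt G w b M Γ j i) / 2 := if_pos hij

theorem rebalance_apply_of_not_matched (hij : ¬M i j) : rebalance G w b M Γ j i = 0 := if_neg hij

theorem lipschitzWith_rebalance : LipschitzWith 1 (rebalance G w b M) := by
  refine LipschitzWith.mk_one fun Γ Γ' => (dist_pi_le_iff dist_nonneg).2 fun j =>
    (dist_pi_le_iff dist_nonneg).2 fun i => ?_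
  by_cases hij : M i j
  · have halt := bBestAlt_le_bBestAlt_add_dist (G := G) (w := w) (b := b) (M := M)
    rw [rebalance_apply_of_matched hij, rebalance_apply_of_matched hij, Real.dist_eq, abs_le]
    constructor <;>
      linarith [halt Γ Γ' i j, halt Γ Γ' j i, halt Γ' Γ i j, halt Γ' Γ j i, dist_comm Γ Γ']
  · rw [rebalance_apply_of_not_matched hij, rebalance_apply_of_not_matched hij, dist_self]
    exact dist_nonneg

theorem isBOutcome_rebalance (hw : ∀ i j, w i j = w j i) (h : Γ ∈ stableOutcomes G w b M) :
    IsBOutcome G w b M (rebalance G w b M Γ) := by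
  obtain ⟨hM, -, hpay⟩ := h.1
  refine ⟨hM, fun j i hji => rebalance_apply_of_not_matched (mt (hM.2.1 i j) hji),
    fun j i hji => ?_⟩
  have hij : M i j := hM.2.1 j i hji
  have halt_nonneg : 0 ≤ bBestAlt G w b M Γ i j := bBestAlt_nonneg
  have halt_le : bBestAlt G w b M Γ j i ≤ w i j := by
    linarith [bBestAlt_le_bEarn h hji, h.1.bEarn_le hji, hpay i j hij, hpay j i hji]
  rw [rebalance_apply_of_matched hij, rebalance_apply_of_matched hji, hw j i]
  constructor <;> linarith

theorem half_le_bEarn_rebalance (h : Γ ∈ stableOutcomes G w b M) (hadj : G.Adj i k)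
    (hik : ¬M i k) :
    (bEarn b M Γ i + (w i k - bEarn b M Γ k)) / 2 ≤ bEarn b M (rebalance G w b M Γ) i := by
  rcases bEarn_eq_zero_or b M i with hzero | ⟨hsat, hne⟩
  · linarith [h.2 i k hadj hik, hzero Γ, hzero (rebalance G w b M Γ)]
  · refine (le_bEarn_iff hsat hne).2 fun j hij => ?_
    have hji : M j i := h.1.symm hij
    rw [rebalance_apply_of_matched hij]
    linarith [sub_bEarn_le_bBestAlt h hsat hij hadj hik, bBestAlt_le_bEarn h hji,
      h.1.bEarn_le hij, h.1.bEarn_le hji, (h.1.2.2 i j hij).2]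

theorem mapsTo_rebalance (hw : ∀ i j, w i j = w j i) :
    Set.MapsTo (rebalance G w b M) (stableOutcomes G w b M) (stableOutcomes G w b M) :=
  fun Γ h => ⟨isBOutcome_rebalance hw h, fun i k hadj hik => by
    linarith [half_le_bEarn_rebalance h hadj hik,
      half_le_bEarn_rebalance h hadj.symm (mt h.1.symm hik), hw i k]⟩

theorem BBalanced.of_rebalance_eq (hw : ∀ i j, w i j = w j i) (h : IsBOutcome G w b M Γ)
    (hfix : rebalance G w b M Γ = Γ) : BBalanced G w b M Γ := fun i j hij => by
  change Γ j i - bBestAlt G w b M Γ i j = Γ i j - bBestAlt G w b M Γ j i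
  have hji := congrFun (congrFun hfix j) i
  have hij' := congrFun (congrFun hfix i) j
  rw [rebalance_apply_of_matched hij] at hji
  rw [rebalance_apply_of_matched (h.symm hij)] at hij'
  linarith [hw i j]

theorem exists_stable_balanced (hw : ∀ i j, w i j = w j i)
    (hne : (stableOutcomes G w b M).Nonempty) :
    ∃ Γ, IsBOutcome G w b M Γ ∧ BStable G w b M Γ ∧ BBalanced G w b M Γ := by
  obtain ⟨Γ, ⟨hΓ, hstab⟩, hfix⟩ := exists_eq_self_of_lipschitzOnWith_one isCompact_stableOutcomes
    (convex_stableOutcomes.starConvex hne.some_mem) hne (mapsTo_rebalance hw)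
    lipschitzWith_rebalance.lipschitzOnWith
  exact ⟨Γ, hΓ, hstab, .of_rebalance_eq hw hΓ hfix⟩

end Rebalancing

section ComplementaryDual

variable {V : Type*} {G : SimpleGraph V} {w : V → V → ℝ} {b : V → ℕ} {M : V → V → Prop}
  {y : V → ℝ}

/-- Node prices `y` dual to the `b`-matching `M`: they satisfy complementary slackness with `M`
in the linear program, in the form obtained by eliminating the multipliers of the constraints
`x i j ≤ 1`. -/
structure IsComplementaryDual (G : SimpleGraph V) (w : V → V → ℝ) (b : V → ℕ)
    (M : V → V → Prop) (y : V → ℝ) : Prop where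
  nonneg : ∀ i, 0 ≤ y i
  add_le : ∀ i j, M i j → y i + y j ≤ w i j
  le_add : ∀ i j, G.Adj i j → ¬M i j → w i j ≤ y i + y j
  eq_zero : ∀ i, bdeg M i ≠ b i → y i = 0

theorem IsComplementaryDual.stableOutcomes_nonempty [Finite V] (hw : ∀ i j, w i j = w j i)
    (hb : ∀ i, 1 ≤ b i) (hM : IsBMatching G b M) (hy : IsComplementaryDual G w b M y) :
    (stableOutcomes G w b M).Nonempty := by
  classical
  set Γ : V → V → ℝ := fun j i => if M i j then (w i j + y i - y j) / 2 else 0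
  have hΓ : ∀ i j, M i j → Γ j i = (w i j + y i - y j) / 2 := fun i j hij => if_pos hij
  have hsymm : ∀ i j, M i j → M j i := hM.2.1
  have hearn : ∀ i, y i ≤ bEarn b M Γ i := fun i => by
    by_cases hsat : bdeg M i = b i
    · have hpos : bdeg M i ≠ 0 := by have := hb i; omega
      refine (le_bEarn_iff hsat (Set.nonempty_of_ncard_ne_zero hpos)).2 fun j hij => ?_
      linarith [hΓ i j hij, hy.add_le i j hij]
    · rw [bEarn_of_bdeg_ne hsat, hy.eq_zero i hsat]
  refine ⟨Γ, ⟨hM, fun j i hji => if_neg (mt (hsymm i j) hji), fun j i hji => ?_⟩,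
    fun i j hadj hij => (hy.le_add i j hadj hij).trans (add_le_add (hearn i) (hearn j))⟩
  rw [hΓ i j (hsymm j i hji), hΓ j i hji, hw j i]
  constructor <;> linarith [hy.add_le i j (hsymm j i hji), hy.nonneg i]

end ComplementaryDual

section LinearProgram

variable {V : Type*} {G : SimpleGraph V} {w c x : V → V → ℝ} {b : V → ℕ}

/-- The feasible region of the `b`-matching linear program without its capacity constraints. -/
def edgeBox (G : SimpleGraph V) : Set (V → V → ℝ) :=
  {x | (∀ i j, x i j = x j i) ∧ (∀ i j, x i j ∈ Set.Icc 0 1) ∧ ∀ i j, ¬G.Adj i j → x i j = 0}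

theorem convex_edgeBox : Convex ℝ (edgeBox G) := by
  rintro x ⟨hsymm, hmem, hoff⟩ y ⟨hsymm', hmem', hoff'⟩ s t hs ht hst
  refine ⟨fun i j => ?_, fun i j => convex_Icc 0 1 (hmem i j) (hmem' i j) hs ht hst,
    fun i j hij => ?_⟩
  · simp [hsymm i j, hsymm' i j]
  · simp [hoff i j hij, hoff' i j hij]

/-- The `b`-matching read off from an integral point `x` of the linear program. -/
def matchingOf (x : V → V → ℝ) (i j : V) : Prop := x i j = 1

variable [Fintype V] [DecidableRel G.Adj]

theorem concaveOn_LPval : ConcaveOn ℝ (edgeBox G) (LPval G c) := by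
  have hlin : IsLinearMap ℝ (LPval G c) := by
    refine ⟨fun x y => by simp [LPval, mul_add, sum_add_distrib], fun r x => ?_⟩
    simp only [LPval, Pi.smul_apply, smul_eq_mul, mul_sum, mul_left_comm]
  exact hlin.mk'.concaveOn convex_edgeBox

theorem convexOn_sum_neighborFinset_sub (r : ℝ) (i : V) :
    ConvexOn ℝ (edgeBox G) fun x => ∑ j ∈ G.neighborFinset i, x i j - r := by
  have hlin : IsLinearMap ℝ fun x : V → V → ℝ => ∑ j ∈ G.neighborFinset i, x i j :=
    ⟨fun x y => by simp [sum_add_distrib], fun r x => by simp [mul_sum]⟩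
  exact (hlin.mk'.convexOn convex_edgeBox).sub (concaveOn_const r convex_edgeBox)

theorem sum_sum_neighborFinset_comm (f : V → V → ℝ) :
    ∑ i, ∑ j ∈ G.neighborFinset i, f i j = ∑ i, ∑ j ∈ G.neighborFinset i, f j i :=
  sum_comm' fun i j => by simp [G.adj_comm]

theorem LPval_sub_sum_mul (hx : ∀ i j, x i j = x j i) (y : V → ℝ) :
    LPval G w x - ∑ i, y i * (∑ j ∈ G.neighborFinset i, x i j - b i) =
      LPval G (fun i j => w i j - y i - y j) x + ∑ i, y i * b i := by
  have hswap : ∑ i, ∑ j ∈ G.neighborFinset i, y j * x i j =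
      ∑ i, ∑ j ∈ G.neighborFinset i, y i * x i j := by
    rw [sum_sum_neighborFinset_comm]
    simp only [fun i j => hx j i]
  simp only [LPval, sub_mul, mul_sub, sum_sub_distrib, hswap, ← mul_sum]
  ring

theorem mul_eq_max_of_isMaxOn_edgeBox (hc : ∀ i j, c i j = c j i) (hx : x ∈ edgeBox G)
    (hmax : IsMaxOn (LPval G c) (edgeBox G) x) {i j : V} (hij : G.Adj i j) :
    c i j * x i j = max (c i j) 0 := by
  classical
  set z : V → V → ℝ := fun k l => if G.Adj k l ∧ 0 < c k l then 1 else 0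
  have hzbox : z ∈ edgeBox G := by
    refine ⟨fun k l => ?_, fun k l => ?_, fun k l hkl => if_neg fun h => hkl h.1⟩
    · simp only [z, G.adj_comm, hc k l]
    · simp only [z]
      split_ifs <;> simp
  have hz : ∀ {k l}, G.Adj k l → c k l * z k l = max (c k l) 0 := fun {k l} hkl => by
    rcases le_or_gt (c k l) 0 with hle | hlt
    · simp [z, hle]
    · simp [z, hkl, hlt, hlt.le]
  have hle : ∀ k, ∀ l ∈ G.neighborFinset k, c k l * x k l ≤ c k l * z k l := fun k l hl => by
    obtain ⟨h0, h1⟩ := hx.2.1 k l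
    rw [hz ((G.mem_neighborFinset k l).1 hl)]
    rcases le_total (c k l) 0 with hneg | hpos
    · exact (mul_nonpos_of_nonpos_of_nonneg hneg h0).trans (le_max_right _ _)
    · exact (mul_le_of_le_one_right hpos h1).trans (le_max_left _ _)
  have hval : LPval G c z ≤ LPval G c x := hmax hzbox
  have hrow : ∀ k ∈ univ, ∑ l ∈ G.neighborFinset k, c k l * x k l ≤
      ∑ l ∈ G.neighborFinset k, c k l * z k l := fun k _ => sum_le_sum (hle k)
  have hsum : ∑ k, ∑ l ∈ G.neighborFinset k, c k l * x k l =
      ∑ k, ∑ l ∈ G.neighborFinset k, c k l * z k l :=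
    (sum_le_sum hrow).antisymm (le_of_mul_le_mul_left hval one_half_pos)
  rw [← hz hij]
  exact (sum_eq_sum_iff_of_le (hle i)).1 ((sum_eq_sum_iff_of_le hrow).1 hsum i (mem_univ i)) j
    ((G.mem_neighborFinset i j).2 hij)

theorem sum_neighborFinset_eq_bdeg (hx : x ∈ edgeBox G) (hint : Integral x) (i : V) :
    ∑ j ∈ G.neighborFinset i, x i j = bdeg (matchingOf x) i := by
  classical
  have hind : ∀ j, x i j = if matchingOf x i j then 1 else 0 := fun j => by
    rcases hint i j with h | h <;> simp [matchingOf, h]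
  rw [bdeg_eq_card_filter, ← sum_boole]
  refine (sum_congr rfl fun j _ => hind j).trans (sum_subset (subset_univ _) fun j _ hj => ?_)
  rw [← hind, hx.2.2 i j (mt (G.mem_neighborFinset i j).2 hj)]

variable [DecidableEq V]

theorem bLPFeasible_iff : BLPFeasible G b x ↔
    x ∈ {x ∈ edgeBox G | ∀ i, ∑ j ∈ G.neighborFinset i, x i j - b i ≤ 0} := by
  simp only [BLPFeasible, edgeBox, Set.mem_ofPred_eq, Set.mem_Icc, forall_and, sub_nonpos]
  tauto

theorem BLPFeasible.isBMatching_matchingOf (hx : BLPFeasible G b x) (hint : Integral x) :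
    IsBMatching G b (matchingOf x) := by
  obtain ⟨hbox, hcap⟩ := bLPFeasible_iff.1 hx
  refine ⟨fun i j hij => by_contra fun hadj => ?_, fun i j hij => (hbox.1 j i).trans hij,
    fun i => ?_⟩
  · exact zero_ne_one ((hbox.2.2 i j hadj).symm.trans hij)
  · have := hcap i
    rwa [sum_neighborFinset_eq_bdeg hbox hint, sub_nonpos, Nat.cast_le] at this

theorem BLPOptimal.exists_capacity_multipliers (hb : ∀ i, 1 ≤ b i) (hopt : BLPOptimal G w b x) :
    ∃ y : V → ℝ, (∀ i, 0 ≤ y i) ∧ (∀ i, y i * (∑ j ∈ G.neighborFinset i, x i j - b i) = 0) ∧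
      IsMaxOn (LPval G fun i j => w i j - y i - y j) (edgeBox G) x := by
  have hbox : x ∈ edgeBox G := (bLPFeasible_iff.1 hopt.1).1
  have hslater : ∃ z ∈ edgeBox G, ∀ i, ∑ j ∈ G.neighborFinset i, z i j - b i < 0 :=
    ⟨0, by simp [edgeBox], fun i => by simpa using Nat.zero_lt_of_lt (hb i)⟩
  obtain ⟨y, hy, hslack, hmax⟩ := exists_kkt_multipliers concaveOn_LPval
    (fun i => convexOn_sum_neighborFinset_sub (b i : ℝ) i) hslater (bLPFeasible_iff.1 hopt.1)
    fun z hz => hopt.2 z (bLPFeasible_iff.2 hz)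
  refine ⟨y, hy, hslack, fun z hz => ?_⟩
  have hle := hmax hz
  simp only [Set.mem_ofPred_eq] at hle
  rw [LPval_sub_sum_mul hz.1, LPval_sub_sum_mul hbox.1] at hle
  exact le_of_add_le_add_right hle

theorem BLPOptimal.exists_isComplementaryDual (hw : ∀ i j, w i j = w j i) (hb : ∀ i, 1 ≤ b i)
    (hopt : BLPOptimal G w b x) (hint : Integral x) :
    ∃ y, IsComplementaryDual G w b (matchingOf x) y := by
  have hbox : x ∈ edgeBox G := (bLPFeasible_iff.1 hopt.1).1
  obtain ⟨y, hy, hslack, hmax⟩ := hopt.exists_capacity_multipliers hb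
  have hreduced : ∀ {i j}, G.Adj i j →
      (w i j - y i - y j) * x i j = max (w i j - y i - y j) 0 :=
    mul_eq_max_of_isMaxOn_edgeBox (fun i j => by rw [hw i j]; ring) hbox hmax
  refine ⟨y, hy, fun i j hij => ?_, fun i j hadj hij => ?_, fun i hi => ?_⟩
  · have := hreduced ((hopt.1.isBMatching_matchingOf hint).1 i j hij)
    rw [show x i j = 1 from hij, mul_one] at this
    linarith [left_eq_sup.1 this]
  · have := hreduced hadj
    rw [(hint i j).resolve_right hij, mul_zero] at this
    linarith [right_eq_sup.1 this]
  · refine (mul_eq_zero.1 (hslack i)).resolve_right (sub_ne_zero.2 ?_)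
    exact sum_neighborFinset_eq_bdeg hbox hint i ▸ Nat.cast_injective.ne hi

end LinearProgram

theorem bmatching_NB_exists_general
    {V : Type*} [Fintype V] [DecidableEq V] (G : SimpleGraph V) [DecidableRel G.Adj]
    (w : V → V → ℝ) (hw : ∀ i j, w i j = w j i)
    (b : V → ℕ) (hb : ∀ i, 1 ≤ b i)
    (xstar : V → V → ℝ) (hopt : BLPOptimal G w b xstar) (hint : Integral xstar) :
    ∃ (M : V → V → Prop) (Γ : V → V → ℝ),
      IsBOutcome G w b M Γ ∧ BStable G w b M Γ ∧ BBalanced G w b M Γ := by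
  have hM : IsBMatching G b (matchingOf xstar) := hopt.1.isBMatching_matchingOf hint
  obtain ⟨y, hy⟩ := hopt.exists_isComplementaryDual hw hb hint
  exact ⟨matchingOf xstar, exists_stable_balanced hw (hy.stableOutcomes_nonempty hw hb hM)⟩

/-- If the primal LP for maximum weight `b`-matching has a unique
optimum and this optimum is integral, then the instance possesses a Nash bargaining
solution: a trade outcome that is both stable and balanced. -/
theorem bmatching_NB_exists
    {V : Type*} [Fintype V] [DecidableEq V] (G : SimpleGraph V) [DecidableRel G.Adj]
    (w : V → V → ℝ) (hw : GoodW G w)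
    (b : V → ℕ) (hb : ∀ i, 1 ≤ b i)
    (xstar : V → V → ℝ) (hopt : BLPOptimal G w b xstar) (hint : Integral xstar)
    (huniq : ∀ x, BLPOptimal G w b x → x = xstar) :
    ∃ (M : V → V → Prop) (Γ : V → V → ℝ),
      IsBOutcome G w b M Γ ∧ BStable G w b M Γ ∧ BBalanced G w b M Γ :=
  bmatching_NB_exists_general G w hw.1 b hb xstar hopt hint

end EN
end
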